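/- arXiv:1312.0668 — 3 statements merged into one kernel-verified Lean document; each statement's English description precedes it below -/
import Mathlib

section
/- Let ω be a nondecreasing sequence of positive reals tending to +∞, let (n_k) be a sequence of distinct positive integers satisfying Condition A_ω, let f satisfy the stated conditions, and put S_N(x) = Σ_{k=1}^N f(n_k x) and σ_N = (∫₀¹ S_N(x)² dx)^{1/2}. Then there is an absolute constant C such that for every integer p ≥ 3 and every N large enough that ω_{⌊N^{1/4}⌋} ≥ 8p: if p is even then |∫₀¹ S_N(x)^p dx − (p!/((p/2)!)) 2^{-p/2} σ_N^p| ≤ C·exp(p²) N^{(p−1)/2} (log N)^p, and if p is odd then |∫₀¹ S_N(x)^p dx| ≤ C·exp(p²) N^{(p−1)/2} (log N)^p. -/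
/-!
For a trigonometric polynomial `g` of degree `d` in place of `f`, Condition `A_ω` at level
`M = ⌊N ^ (1/4)⌋` says that a dilate `g (n_k ·)` with `n_k` not among the `M` smallest elements
cannot resonate with any product of at most `p` other dilates, provided `p ≤ ω_M` and
`p d ≤ M ^ ω_M` (`freq_no_cancel`). Hence, for moments up to order `p`, adding such a dilate acts
exactly like adding an independent variable (`moment_rec`): the moments obey a binomial recursion.

The at most `M` exceptional dilates form a starting variable bounded by `M K`, where `K` bounds
`|g|`; the remaining ones are added one at a time. The moments of a centred Gaussian variable of the
same variance satisfy the same recursion up to a term of lower order (`gaussMoment_step`), so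
induction on the order of the moment and on the number of summands gives
`|∫ S_N ^ p - gaussMoment p σ_N²| ≤ 8 ^ p p! K ^ p N ^ ((p - 1) / 2)` for `g`
(`moment_comparison_unit`, `trig_moment`).

The general `f` is replaced by its average `g = smooth f d` against the normalised kernel
`cos (π t) ^ (2 d)`. This is a trigonometric polynomial of degree `d` (`smooth_mem`), it obeys the
same sup bound as `f`, and `‖f - g‖₁ = O(d ^ (-1/2))` (`smooth_L1`), since translation is Lipschitz
in `L¹` for periodic functions of bounded variation (`bv_modulus`). The choice `d = M ^ (7 p)` is
admissible as `ω_M ≥ 8 p`, and it makes the cost of replacing `f` by `g` in `∫ S_N ^ p` and in `σ_N`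
negligible (`integral_pow_sub_le`, `gaussMoment_lipschitz`). Finally `(16 K) ^ p p! = O(exp (p²))`
(`const_bound`); no logarithm is lost.
-/

open MeasureTheory Filter Real Topology

noncomputable section

/-- `n k` is among the `N` smallest elements of the sequence `n`. -/
def AmongSmallest (n : ℕ → ℕ) (N : ℕ) (k : ℕ) : Prop :=
  {j : ℕ | n j ≤ n k}.ncard ≤ N

/-- Condition `A_ω` with explicit threshold `N₀`. -/
def CondAWith (ω : ℕ → ℝ) (n : ℕ → ℕ) (N₀ : ℕ) : Prop :=
  ∀ N : ℕ, N₀ ≤ N →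
    ∀ (r : ℕ) (k : Fin r → ℕ) (a : Fin r → ℤ),
      2 ≤ r → (r : ℝ) ≤ ω N →
      Function.Injective k →
      (∀ i, a i ≠ 0) →
      (∀ i, (|a i| : ℝ) ≤ (N : ℝ) ^ ω N) →
      (∑ i, a i * (n (k i) : ℤ)) = 0 →
      ∀ i, AmongSmallest n N (k i)

/-- Condition `A_ω`. -/
def CondA (ω : ℕ → ℝ) (n : ℕ → ℕ) : Prop := ∃ N₀, CondAWith ω n N₀

/-! ### Gaussian moments and the comparison recursion -/

/-- The `m`-th moment of a centred Gaussian variable of variance `v`, as a polynomial in `v`. -/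
def gaussMoment (m : ℕ) (v : ℝ) : ℝ :=
  if Even m then ((m.factorial : ℝ) / ((m / 2).factorial * 2 ^ (m / 2))) * v ^ (m / 2) else 0

lemma gaussMoment_even (l : ℕ) (v : ℝ) : gaussMoment (2 * l) v =
    (((2 * l).factorial : ℝ) / (l.factorial * 2 ^ l)) * v ^ l := by
  simp [gaussMoment]

lemma gaussMoment_odd {m : ℕ} (h : Odd m) (v : ℝ) : gaussMoment m v = 0 := by
  simp [gaussMoment, Nat.not_even_iff_odd.mpr h]

/-- Second-order Taylor bound for `v ↦ v ^ (l + 2)`. -/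
lemma taylor_pow (v μ Y : ℝ) (hv : |v| ≤ Y) (hvμ : |v + μ| ≤ Y) (l : ℕ) :
    |(v + μ) ^ (l + 2) - v ^ (l + 2) - (l + 2) * μ * v ^ (l + 1)|
      ≤ (l + 2) ^ 2 * μ ^ 2 * Y ^ l := by
  have hY : 0 ≤ Y := (abs_nonneg v).trans hv
  induction l with
  | zero =>
    have : (v + μ) ^ (0 + 2) - v ^ (0 + 2) - ((0 : ℕ) + 2) * μ * v ^ (0 + 1) = μ ^ 2 := by
      push_cast; ring
    rw [this, abs_of_nonneg (sq_nonneg μ)]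
    push_cast
    nlinarith [sq_nonneg μ]
  | succ l ih =>
    have e : (v + μ) ^ (l + 1 + 2) - v ^ (l + 1 + 2) - ((l + 1 : ℕ) + 2) * μ * v ^ (l + 1 + 1)
        = (v + μ) * ((v + μ) ^ (l + 2) - v ^ (l + 2) - (l + 2) * μ * v ^ (l + 1))
          + (l + 2) * μ ^ 2 * v ^ (l + 1) := by
      push_cast; ring
    rw [e]
    have h1 : |(v + μ) * ((v + μ) ^ (l + 2) - v ^ (l + 2) - (l + 2) * μ * v ^ (l + 1))|
        ≤ Y * ((l + 2) ^ 2 * μ ^ 2 * Y ^ l) := by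
      rw [abs_mul]; gcongr
    have h2 : |((l : ℝ) + 2) * μ ^ 2 * v ^ (l + 1)| ≤ (l + 2) * μ ^ 2 * Y ^ (l + 1) := by
      rw [abs_mul, abs_pow, abs_of_nonneg (by positivity : (0 : ℝ) ≤ (l + 2) * μ ^ 2)]
      gcongr
    refine (abs_add_le _ _).trans ((add_le_add h1 h2).trans ?_)
    have h3 : 0 ≤ μ ^ 2 * Y ^ (l + 1) := by positivity
    have : (((l + 1 : ℕ) : ℝ) + 2) ^ 2 * μ ^ 2 * Y ^ (l + 1)
      = Y * ((l + 2) ^ 2 * μ ^ 2 * Y ^ l) + (l + 2) * μ ^ 2 * Y ^ (l + 1)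
        + (l + 3) * (μ ^ 2 * Y ^ (l + 1)) := by push_cast; ring
    rw [this]
    have : 0 ≤ ((l : ℝ) + 3) * (μ ^ 2 * Y ^ (l + 1)) := by positivity
    linarith

lemma sq_le_four_mul_factorial (l : ℕ) : l ^ 2 ≤ 4 * l.factorial := by
  induction l with
  | zero => simp
  | succ l ih =>
    rw [Nat.factorial_succ]
    rcases Nat.lt_or_ge l 2 with h | h
    · interval_cases l <;> simp
    · nlinarith [Nat.self_le_factorial l]

lemma abs_gaussMoment_le {R v : ℝ} (hv : |v| ≤ 2 * R ^ 2) (m : ℕ) (hR : 0 ≤ R) :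
    |gaussMoment m v| ≤ m.factorial * R ^ m := by
  rcases Nat.even_or_odd' m with ⟨l, rfl | rfl⟩
  · rw [gaussMoment_even, abs_mul, abs_of_nonneg (by positivity), abs_pow]
    calc _ ≤ ((2 * l).factorial : ℝ) / (l.factorial * 2 ^ l) * (2 * R ^ 2) ^ l := by gcongr
      _ = ((2 * l).factorial : ℝ) * R ^ (2 * l) / l.factorial := by
        rw [mul_pow, ← pow_mul]; field_simp
      _ ≤ _ := div_le_self (by positivity) (by exact_mod_cast Nat.one_le_iff_ne_zero.mpr (Nat.factorial_ne_zero l))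
  · rw [gaussMoment_odd ⟨l, rfl⟩]; simp; positivity

/-- Adding an independent variable of variance `μ` changes the Gaussian moments as prescribed by
the terms of order zero and two of the binomial expansion, up to a lower-order error. -/
lemma gaussMoment_step {R v μ : ℝ} (hR : 1 ≤ R) (hv : |v| ≤ 2 * R ^ 2) (hvμ : |v + μ| ≤ 2 * R ^ 2)
    (hμ : |μ| ≤ 1) (m : ℕ) :
    |gaussMoment (m + 3) v + ((m + 3).choose 2 : ℝ) * (gaussMoment (m + 1) v * μ)
      - gaussMoment (m + 3) (v + μ)| ≤ (m + 3).factorial * R ^ m := by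
  rcases Nat.even_or_odd' m with ⟨t, rfl | rfl⟩
  · rw [gaussMoment_odd ⟨t + 1, by ring⟩, gaussMoment_odd ⟨t, by ring⟩,
      gaussMoment_odd ⟨t + 1, by ring⟩]
    simp; positivity
  · have e1 : 2 * t + 1 + 3 = 2 * (t + 2) := by ring
    have e2 : 2 * t + 1 + 1 = 2 * (t + 1) := by ring
    rw [e1, e2, gaussMoment_even, gaussMoment_even, gaussMoment_even]
    set h : ℝ := ((2 * (t + 2)).factorial : ℝ) / ((t + 2).factorial * 2 ^ (t + 2)) with hh
    have hc : ((2 * (t + 2)).choose 2 : ℝ) *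
        (((2 * (t + 1)).factorial : ℝ) / ((t + 1).factorial * 2 ^ (t + 1))) = (t + 2) * h := by
      rw [hh, Nat.cast_choose_two, show 2 * (t + 2) = 2 * (t + 1) + 1 + 1 by ring,
        Nat.factorial_succ (2 * (t + 1) + 1), Nat.factorial_succ (2 * (t + 1)),
        Nat.factorial_succ (t + 1)]
      have : (0 : ℝ) < (t + 1).factorial := by exact_mod_cast Nat.factorial_pos _
      push_cast
      field_simp
      ring
    have e3 : h * v ^ (t + 2) + ((2 * (t + 2)).choose 2 : ℝ) *
        (((2 * (t + 1)).factorial : ℝ) / ((t + 1).factorial * 2 ^ (t + 1)) * v ^ (t + 1) * μ)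
        - h * (v + μ) ^ (t + 2)
        = -(h * ((v + μ) ^ (t + 2) - v ^ (t + 2) - (t + 2) * μ * v ^ (t + 1))) := by
      rw [show ∀ a b c d : ℝ, a * (b * c * d) = a * b * (c * d) by intros; ring, hc]; ring
    rw [e3, abs_neg, abs_mul, abs_of_nonneg (by positivity : 0 ≤ h)]
    have hf : (0 : ℝ) < (t + 2).factorial := by exact_mod_cast Nat.factorial_pos _
    have hμ2 : μ ^ 2 ≤ 1 := by rw [← sq_abs]; exact pow_le_one₀ (abs_nonneg _) hμ
    have hsq : ((t : ℝ) + 2) ^ 2 ≤ 4 * (t + 2).factorial := by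
      exact_mod_cast sq_le_four_mul_factorial (t + 2)
    calc _ ≤ h * ((t + 2) ^ 2 * μ ^ 2 * (2 * R ^ 2) ^ t) := by
          gcongr; exact taylor_pow v μ _ hv hvμ t
      _ ≤ h * (4 * (t + 2).factorial * 1 * (2 * R ^ 2) ^ t) := by gcongr
      _ = (2 * (t + 2)).factorial * R ^ (2 * t) := by
          rw [hh, mul_pow, ← pow_mul, pow_add 2 t 2]; field_simp; norm_num
      _ ≤ _ := by
          gcongr
          omega

/-- Moment comparison, in units where the summands are bounded by one. Here `a s m` plays the role
of the `m`-th moment of `Y + ∑ k ∈ s, X k`, with `Y` centred and bounded by `M ≤ √R`, and the `X k`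
independent of each other and of `Y` up to order `p`, with common moments `μ`. -/
lemma moment_comparison_unit {ι : Type*} [DecidableEq ι] (R M : ℝ) (hR : 1 ≤ R) (hM : 1 ≤ M)
    (hMR : M ^ 2 ≤ R) (p : ℕ) (hp : 2 ≤ p) (G : Finset ι) (hG : (G.card : ℝ) ≤ R ^ 2)
    (a : Finset ι → ℕ → ℝ) (μ : ℕ → ℝ) (hμ0 : μ 0 = 1) (hμ1 : μ 1 = 0) (hμ : ∀ q, |μ q| ≤ 1)
    (ha0 : ∀ s, a s 0 = 1) (ha1 : a ∅ 1 = 0) (hae : ∀ m, |a ∅ m| ≤ M ^ m)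
    (hrec : ∀ k s, k ∉ s → insert k s ⊆ G → ∀ m ≤ p, a (insert k s) m =
      ∑ q ∈ Finset.range (m + 1), (m.choose q : ℝ) * (a s (m - q) * μ q)) :
    (∀ s ⊆ G, |a s 2| ≤ 2 * R ^ 2) ∧
    ∀ m ≤ p, ∀ s ⊆ G,
      |a s m - gaussMoment m (a s 2)| ≤ 8 ^ m * m.factorial * R ^ m / R := by
  have hR0 : 0 < R := by linarith
  have hs1 : ∀ s ⊆ G, a s 1 = 0 := by
    intro s
    induction s using Finset.induction_on with
    | empty => intro _; exact ha1
    | insert k s hk ih =>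
      intro h
      rw [hrec k s hk h 1 (by omega)]
      simp [Finset.sum_range_succ, hμ0, hμ1, ih ((Finset.subset_insert _ _).trans h)]
  have hs2 : ∀ k s, k ∉ s → insert k s ⊆ G → a (insert k s) 2 = a s 2 + μ 2 := by
    intro k s hk h
    rw [hrec k s hk h 2 hp]
    simp [Finset.sum_range_succ, hμ0, hμ1, ha0]
  have hcard : ∀ s ⊆ G, (s.card : ℝ) ≤ R ^ 2 := fun s h =>
    le_trans (by exact_mod_cast Finset.card_le_card h) hG
  have hv : ∀ s ⊆ G, |a s 2| ≤ 2 * R ^ 2 := by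
    have : ∀ s ⊆ G, |a s 2| ≤ M ^ 2 + s.card := by
      intro s
      induction s using Finset.induction_on with
      | empty => intro _; simpa using hae 2
      | insert k s hk ih =>
        intro h
        rw [hs2 k s hk h, Finset.card_insert_of_notMem hk]
        have := ih ((Finset.subset_insert _ _).trans h)
        push_cast
        linarith [abs_add_le (a s 2) (μ 2), hμ 2]
    intro s h
    nlinarith [this s h, hcard s h]
  refine ⟨hv, ?_⟩
  intro m
  induction m using Nat.strong_induction_on with
  | _ m IH =>
  intro hm
  have small : ∀ k < m, ∀ s ⊆ G, |a s k| ≤ 2 * 8 ^ k * k.factorial * R ^ k := by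
    intro k hk s h
    have h1 := IH k hk (by omega) s h
    have h2 := abs_gaussMoment_le (hv s h) k hR0.le
    have h3 : 8 ^ k * k.factorial * R ^ k / R ≤ 8 ^ k * k.factorial * R ^ k :=
      div_le_self (by positivity) hR
    have h4 : (k.factorial : ℝ) * R ^ k ≤ 8 ^ k * (k.factorial * R ^ k) :=
      le_mul_of_one_le_left (by positivity) (one_le_pow₀ (by norm_num))
    have h5 := abs_add_le (a s k - gaussMoment k (a s 2)) (gaussMoment k (a s 2))
    rw [sub_add_cancel] at h5
    linarith
  match m, hm, IH, small with
  | 0, _, _, _ => intro s h; simp [ha0, gaussMoment]; positivity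
  | 1, _, _, _ => intro s h; simp [hs1 s h, gaussMoment]; positivity
  | 2, _, _, _ => intro s h; simp [gaussMoment]; positivity
  | m + 3, hm, IH, small =>
  -- Each new summand costs `O(R ^ m)`, and there are at most `R ^ 2` of them.
  have key : ∀ s ⊆ G, |a s (m + 3) - gaussMoment (m + 3) (a s 2)| ≤
      2 * (m + 3).factorial * R ^ (m + 2) +
        s.card * ((m + 3).factorial * 8 ^ (m + 1) * R ^ m) := by
    intro s
    induction s using Finset.induction_on with
    | empty =>
      intro h
      have hMm : M ^ (m + 3) ≤ R ^ (m + 2) :=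
        calc M ^ (m + 3) ≤ M ^ (2 * (m + 2)) := pow_le_pow_right₀ hM (by omega)
          _ = (M ^ 2) ^ (m + 2) := pow_mul _ _ _
          _ ≤ _ := by gcongr
      have h1 := hae (m + 3)
      have h2 := abs_gaussMoment_le (R := M) (v := a ∅ 2)
        (by nlinarith [hae 2, sq_nonneg M]) (m + 3) (by linarith)
      have hf : (1 : ℝ) ≤ (m + 3).factorial := by exact_mod_cast Nat.factorial_pos _
      have h3 : ((m + 3).factorial : ℝ) * M ^ (m + 3) ≤ (m + 3).factorial * R ^ (m + 2) := by
        gcongr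
      have h4 : R ^ (m + 2) ≤ (m + 3).factorial * R ^ (m + 2) :=
        le_mul_of_one_le_left (by positivity) hf
      have := abs_sub (a ∅ (m + 3)) (gaussMoment (m + 3) (a ∅ 2))
      simp only [Finset.card_empty, Nat.cast_zero, zero_mul, add_zero]
      linarith
    | insert k s hk ih =>
      intro h
      have hs : s ⊆ G := (Finset.subset_insert _ _).trans h
      have ih := ih hs
      have hexp : a (insert k s) (m + 3) = (∑ q ∈ Finset.range (m + 1),
          ((m + 3).choose (q + 3) : ℝ) * (a s (m - q) * μ (q + 3)))
          + ((m + 3).choose 2 : ℝ) * (a s (m + 1) * μ 2) + a s (m + 3) := by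
        rw [hrec k s hk h (m + 3) hm, Finset.sum_range_succ', Finset.sum_range_succ',
          Finset.sum_range_succ']
        simp only [Nat.reduceSubDiff, zero_add, hμ0, hμ1, mul_zero, add_zero, Nat.choose_zero_right]
        simp
      -- The third and higher moments of the new summand contribute to lower order only.
      have hT : |∑ q ∈ Finset.range (m + 1),
          ((m + 3).choose (q + 3) : ℝ) * (a s (m - q) * μ (q + 3))| ≤
          (m + 3).factorial * R ^ m * (2 * (8 ^ (m + 1) / 7)) := by
        have hgeo : ∑ q ∈ Finset.range (m + 1), (8 : ℝ) ^ (m - q) ≤ 8 ^ (m + 1) / 7 := by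
          have := Finset.sum_range_reflect (fun i => (8 : ℝ) ^ i) (m + 1)
          simp only [Nat.add_sub_cancel] at this
          rw [this, geom_sum_eq (by norm_num)]
          norm_num
          gcongr
          linarith
        calc _ ≤ ∑ q ∈ Finset.range (m + 1), (m + 3).factorial * R ^ m * (2 * 8 ^ (m - q)) := by
              refine (Finset.abs_sum_le_sum_abs _ _).trans (Finset.sum_le_sum fun q hq => ?_)
              have hq : q ≤ m := by simpa [Nat.lt_succ_iff] using hq
              have h1 := small (m - q) (by omega) s hs
              have h2 := hμ (q + 3)
              have hch : ((m + 3).choose (q + 3) * (m - q).factorial : ℝ) ≤ (m + 3).factorial := by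
                have := Nat.choose_mul_factorial_mul_factorial (show q + 3 ≤ m + 3 by omega)
                rw [show m + 3 - (q + 3) = m - q by omega] at this
                have h3 : (m + 3).choose (q + 3) * (m - q).factorial ≤ (m + 3).factorial := by
                  rw [← this]
                  nlinarith [Nat.factorial_pos (q + 3),
                    Nat.zero_le ((m + 3).choose (q + 3) * (m - q).factorial)]
                exact_mod_cast h3
              have hRm : R ^ (m - q) ≤ R ^ m := pow_le_pow_right₀ hR (by omega)
              rw [abs_mul, abs_mul, abs_of_nonneg (by positivity)]
              calc _ ≤ ((m + 3).choose (q + 3) : ℝ) *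
                    (2 * 8 ^ (m - q) * (m - q).factorial * R ^ m * 1) := by
                    gcongr
                    exact h1.trans (by gcongr)
                _ = ((m + 3).choose (q + 3) * (m - q).factorial : ℝ) * R ^ m
                    * (2 * 8 ^ (m - q)) := by ring
                _ ≤ _ := by gcongr
          _ = (m + 3).factorial * R ^ m * (2 * ∑ q ∈ Finset.range (m + 1), (8 : ℝ) ^ (m - q)) := by
              rw [← Finset.mul_sum, ← Finset.mul_sum]
          _ ≤ _ := by gcongr
      have h2 : |((m + 3).choose 2 : ℝ) *
          ((a s (m + 1) - gaussMoment (m + 1) (a s 2)) * μ 2)| ≤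
          (m + 3).factorial * R ^ m * (8 ^ (m + 1) / 2) := by
        have h1 := IH (m + 1) (by omega) (by omega) s hs
        have e : 8 ^ (m + 1) * ((m + 1).factorial : ℝ) * R ^ (m + 1) / R =
            8 ^ (m + 1) * (m + 1).factorial * R ^ m := by
          rw [pow_succ R]; field_simp
        rw [e] at h1
        have hch : ((m + 3).choose 2 : ℝ) * (m + 1).factorial = (m + 3).factorial / 2 := by
          rw [Nat.cast_choose_two, Nat.factorial_succ (m + 2), Nat.factorial_succ (m + 1)]
          push_cast; ring
        rw [abs_mul, abs_mul, abs_of_nonneg (by positivity)]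
        calc _ ≤ ((m + 3).choose 2 : ℝ) * (8 ^ (m + 1) * (m + 1).factorial * R ^ m * 1) := by
              gcongr
              exact hμ 2
          _ = ((m + 3).choose 2 : ℝ) * (m + 1).factorial * (8 ^ (m + 1) * R ^ m) := by ring
          _ = _ := by rw [hch]; ring
      have h3 := gaussMoment_step hR (hv s hs) (by rw [← hs2 k s hk h]; exact hv _ h) (hμ 2) m
      have h8 : (8 : ℝ) ≤ 8 ^ (m + 1) := le_self_pow₀ (by norm_num) (by omega)
      rw [hs2 k s hk h, hexp, Finset.card_insert_of_notMem hk]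
      set Q : ℝ := (m + 3).factorial * R ^ m with hQ
      have hQ0 : 0 ≤ Q := by positivity
      set T := ∑ q ∈ Finset.range (m + 1),
          ((m + 3).choose (q + 3) : ℝ) * (a s (m - q) * μ (q + 3))
      have e : T + ((m + 3).choose 2 : ℝ) * (a s (m + 1) * μ 2) + a s (m + 3)
          - gaussMoment (m + 3) (a s 2 + μ 2)
          = (a s (m + 3) - gaussMoment (m + 3) (a s 2)) + T
          + ((m + 3).choose 2 : ℝ) * ((a s (m + 1) - gaussMoment (m + 1) (a s 2)) * μ 2)
          + (gaussMoment (m + 3) (a s 2) + ((m + 3).choose 2 : ℝ) *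
              (gaussMoment (m + 1) (a s 2) * μ 2) - gaussMoment (m + 3) (a s 2 + μ 2)) := by ring
      rw [e]
      refine (abs_add_le _ _).trans ?_
      refine (add_le_add_left (abs_add_le _ _) _).trans ?_
      refine (add_le_add_left (add_le_add_left (abs_add_le _ _) _) _).trans ?_
      have e2 : ((m + 3).factorial : ℝ) * 8 ^ (m + 1) * R ^ m = Q * 8 ^ (m + 1) := by
        rw [hQ]; ring
      rw [e2] at ih ⊢
      push_cast
      nlinarith [mul_le_mul_of_nonneg_left h8 hQ0]
  intro s h
  refine (key s h).trans ?_
  have hc := hcard s h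
  have e : (8 : ℝ) ^ (m + 3) * (m + 3).factorial * R ^ (m + 3) / R
      = (m + 3).factorial * R ^ (m + 2) * (64 * 8 ^ (m + 1)) := by
    rw [pow_succ R (m + 2)]; field_simp; ring
  have h1 : s.card * ((m + 3).factorial * 8 ^ (m + 1) * R ^ m) ≤
      R ^ 2 * ((m + 3).factorial * 8 ^ (m + 1) * R ^ m) := by gcongr
  have h2 : R ^ 2 * ((m + 3).factorial * 8 ^ (m + 1) * R ^ m)
      = (m + 3).factorial * R ^ (m + 2) * 8 ^ (m + 1) := by ring
  rw [e]
  have h8 : (1 : ℝ) ≤ 8 ^ (m + 1) := one_le_pow₀ (by norm_num)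
  have : (0 : ℝ) ≤ (m + 3).factorial * R ^ (m + 2) := by positivity
  nlinarith

/-- `moment_comparison_unit` after rescaling by a bound `K` for the summands. -/
lemma moment_comparison {ι : Type*} [DecidableEq ι] (R M K : ℝ) (hK : 1 ≤ K) (hR : 1 ≤ R)
    (hM : 1 ≤ M)
    (hMR : M ^ 2 ≤ R) (p : ℕ) (hp : 2 ≤ p) (G : Finset ι) (hG : (G.card : ℝ) ≤ R ^ 2)
    (a : Finset ι → ℕ → ℝ) (μ : ℕ → ℝ) (hμ0 : μ 0 = 1) (hμ1 : μ 1 = 0) (hμ : ∀ q, |μ q| ≤ K ^ q)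
    (ha0 : ∀ s, a s 0 = 1) (ha1 : a ∅ 1 = 0) (hae : ∀ m, |a ∅ m| ≤ (M * K) ^ m)
    (hrec : ∀ k s, k ∉ s → insert k s ⊆ G → ∀ m ≤ p, a (insert k s) m =
      ∑ q ∈ Finset.range (m + 1), (m.choose q : ℝ) * (a s (m - q) * μ q)) :
    |a G 2| ≤ 2 * K ^ 2 * R ^ 2 ∧
      |a G p - gaussMoment p (a G 2)| ≤ 8 ^ p * p.factorial * K ^ p * R ^ p / R := by
  have hK0 : 0 < K := by linarith
  obtain ⟨h1, h2⟩ := moment_comparison_unit R M hR hM hMR p hp G hG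
    (fun s m => a s m / K ^ m) (fun q => μ q / K ^ q) (by simp [hμ0]) (by simp [hμ1])
    (fun q => by
      rw [abs_div, abs_of_pos (pow_pos hK0 q)]
      exact div_le_one_of_le₀ (hμ q) (by positivity))
    (by simp [ha0]) (by simp [ha1])
    (fun m => by
      rw [abs_div, abs_of_pos (pow_pos hK0 m), div_le_iff₀ (pow_pos hK0 m), ← mul_pow]
      exact hae m)
    (fun k s hk h m hm => by
      rw [hrec k s hk h m hm, Finset.sum_div]
      refine Finset.sum_congr rfl fun q hq => ?_
      have hq : q ≤ m := by simpa [Nat.lt_succ_iff] using hq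
      have : K ^ m = K ^ (m - q) * K ^ q := by rw [← pow_add]; congr 1; omega
      rw [this]; field_simp)
  have h1 := h1 G subset_rfl
  have h2 := h2 p le_rfl G subset_rfl
  have hg : gaussMoment p (a G 2 / K ^ 2) = gaussMoment p (a G 2) / K ^ p := by
    rcases Nat.even_or_odd' p with ⟨l, rfl | rfl⟩
    · rw [gaussMoment_even, gaussMoment_even, div_pow, ← pow_mul]; ring
    · rw [gaussMoment_odd ⟨l, rfl⟩, gaussMoment_odd ⟨l, rfl⟩]; simp
  constructor
  · rw [abs_div, abs_of_pos (pow_pos hK0 2), div_le_iff₀ (pow_pos hK0 2)] at h1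
    linarith
  · simp only [hg] at h2
    rw [← sub_div, abs_div, abs_of_pos (pow_pos hK0 p), div_le_iff₀ (pow_pos hK0 p)] at h2
    refine h2.trans (le_of_eq ?_)
    ring

/-! ### Trigonometric polynomials and resonance-free dilates -/

/-- The character `x ↦ exp (2πi b x)`. -/
def chr (b : ℤ) (x : ℝ) : ℂ := Complex.exp (2 * π * Complex.I * b * x)

lemma chr_mul (a b : ℤ) : chr a * chr b = chr (a + b) := by
  funext x
  simp only [chr, Pi.mul_apply, ← Complex.exp_add]
  congr 1; push_cast; ring

lemma chr_comp_mul (a : ℤ) (m : ℕ) (x : ℝ) : chr a (m * x) = chr (a * m) x := by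
  simp only [chr]; congr 1; push_cast; ring

lemma chr_zero (x : ℝ) : chr 0 x = 1 := by simp [chr]

lemma continuous_chr (b : ℤ) : Continuous (chr b) := by
  unfold chr; fun_prop

lemma integral_chr (b : ℤ) : ∫ x in (0:ℝ)..1, chr b x = if b = 0 then 1 else 0 := by
  split_ifs with h
  · subst h; simp [chr_zero]
  · have hc : (2 * π * Complex.I * b : ℂ) ≠ 0 := by
      simp [Real.pi_ne_zero, h]
    simp only [chr]
    rw [integral_exp_mul_complex hc]
    have : Complex.exp (2 * π * Complex.I * b * (1 : ℝ)) = 1 := by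
      rw [Complex.exp_eq_one_iff]; exact ⟨b, by push_cast; ring⟩
    rw [this]; simp

/-- Trigonometric polynomials with frequencies in `Φ`. -/
def TrigPoly (Φ : Set ℤ) : Submodule ℂ (ℝ → ℂ) := Submodule.span ℂ (Set.image chr Φ)

lemma TrigPoly.mono {Φ Ψ : Set ℤ} (h : Φ ⊆ Ψ) : TrigPoly Φ ≤ TrigPoly Ψ :=
  Submodule.span_mono (Set.image_mono h)

lemma TrigPoly.chr_mem {Φ : Set ℤ} {b : ℤ} (hb : b ∈ Φ) : chr b ∈ TrigPoly Φ :=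
  Submodule.subset_span ⟨b, hb, rfl⟩

lemma TrigPoly.one_mem {Φ : Set ℤ} (h : (0 : ℤ) ∈ Φ) : (1 : ℝ → ℂ) ∈ TrigPoly Φ := by
  convert chr_mem h using 1
  funext x; simp [chr_zero]

lemma TrigPoly.mul_mem {Φ Ψ Θ : Set ℤ} (h : ∀ a ∈ Φ, ∀ b ∈ Ψ, a + b ∈ Θ) {u w : ℝ → ℂ}
    (hu : u ∈ TrigPoly Φ) (hw : w ∈ TrigPoly Ψ) : u * w ∈ TrigPoly Θ := by
  have := Submodule.mul_mem_mul hu hw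
  rw [TrigPoly, TrigPoly, Submodule.span_mul_span] at this
  refine Submodule.span_mono ?_ this
  rintro _ ⟨_, ⟨a, ha, rfl⟩, _, ⟨b, hb, rfl⟩, rfl⟩
  exact ⟨a + b, h a ha b hb, (chr_mul a b).symm⟩

lemma TrigPoly.continuous {Φ : Set ℤ} {u : ℝ → ℂ} (hu : u ∈ TrigPoly Φ) : Continuous u := by
  induction hu using Submodule.span_induction with
  | mem x h => obtain ⟨b, -, rfl⟩ := h; exact continuous_chr b
  | zero => exact continuous_zero
  | add x y _ _ hx hy => exact hx.add hy
  | smul a x _ hx => exact hx.const_smul a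

/-- Dilating `u ∈ TrigPoly Φ` by `m` gives frequencies in `m · Φ`. -/
lemma TrigPoly.comp_mul {Φ Ψ : Set ℤ} {m : ℕ} (h : ∀ a ∈ Φ, a * m ∈ Ψ) {u : ℝ → ℂ}
    (hu : u ∈ TrigPoly Φ) : (fun x => u (m * x)) ∈ TrigPoly Ψ := by
  induction hu using Submodule.span_induction with
  | mem x hx =>
    obtain ⟨b, hb, rfl⟩ := hx
    simp only [chr_comp_mul]
    exact chr_mem (h b hb)
  | zero => exact Submodule.zero_mem _
  | add x y _ _ hx hy => exact Submodule.add_mem _ hx hy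
  | smul a x _ hx => exact Submodule.smul_mem _ a hx

/-- If no nonzero frequency of `u (m ·)` cancels a frequency of `h`, then `h` and `u (m ·)` are
uncorrelated on `[0, 1]`. -/
lemma TrigPoly.integral_mul {Φ Ψ : Set ℤ} {m : ℕ}
    (hres : ∀ b ∈ Φ, ∀ a ∈ Ψ, b + a * m = 0 → a = 0) {h u : ℝ → ℂ}
    (hh : h ∈ TrigPoly Φ) (hu : u ∈ TrigPoly Ψ) :
    ∫ x in (0:ℝ)..1, h x * u (m * x) = (∫ x in (0:ℝ)..1, h x) * ∫ x in (0:ℝ)..1, u x := by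
  have ii : ∀ {v : ℝ → ℂ}, Continuous v → IntervalIntegrable v volume 0 1 :=
    fun hv => hv.intervalIntegrable _ _
  have cm : ∀ {v : ℝ → ℂ}, Continuous v → Continuous (fun x : ℝ => v (m * x)) :=
    fun hv => hv.comp (by fun_prop)
  refine Submodule.span_induction₂ (p := fun h u _ _ => ∫ x in (0:ℝ)..1, h x * u (m * x) =
    (∫ x in (0:ℝ)..1, h x) * ∫ x in (0:ℝ)..1, u x) ?_ ?_ ?_ ?_ ?_ ?_ ?_ hh hu
  · rintro _ _ ⟨b, hb, rfl⟩ ⟨a, ha, rfl⟩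
    have e : ∀ x : ℝ, chr b x * chr a (m * x) = chr (b + a * m) x := fun x => by
      rw [chr_comp_mul, ← chr_mul]; rfl
    simp only [e, integral_chr]
    by_cases h0 : a = 0
    · simp [h0]
    · have hne : b + a * m ≠ 0 := fun h => h0 (hres b hb a ha h)
      simp [h0, hne]
  · intros; simp
  · intros; simp
  · intro x y z hx hy hz h1 h2
    have cx := TrigPoly.continuous hx
    have cy := TrigPoly.continuous hy
    have cz := cm (TrigPoly.continuous hz)
    simp only [Pi.add_apply, add_mul]
    rw [intervalIntegral.integral_add (ii (cx.fun_mul cz)) (ii (cy.fun_mul cz)), h1, h2,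
      intervalIntegral.integral_add (ii cx) (ii cy), add_mul]
  · intro x y z hx hy hz h1 h2
    have cx := TrigPoly.continuous hx
    have cy := TrigPoly.continuous hy
    have cz := TrigPoly.continuous hz
    simp only [Pi.add_apply, mul_add]
    rw [intervalIntegral.integral_add (ii (cx.fun_mul (cm cy))) (ii (cx.fun_mul (cm cz))), h1, h2,
      intervalIntegral.integral_add (ii cy) (ii cz), mul_add]
  · intro r x y hx hy h1
    simp only [Pi.smul_apply, smul_eq_mul, mul_assoc, intervalIntegral.integral_const_mul, h1]
  · intro r x y hx hy h1
    simp only [Pi.smul_apply, smul_eq_mul, mul_left_comm _ r,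
      intervalIntegral.integral_const_mul, h1]

/-- The integers `∑ c i * n i` with `c` supported on at most `m` elements of `s` and with
coefficients at most `m * d` in absolute value. -/
def Freq (n : ℕ → ℕ) (d : ℕ) (s : Finset ℕ) (m : ℕ) : Set ℤ :=
  {b | ∃ c : ℕ →₀ ℤ, c.support ⊆ s ∧ c.support.card ≤ m ∧ (∀ i, |c i| ≤ m * d) ∧
    b = c.sum fun i z => z * n i}

/-- The integers of absolute value at most `e`. -/
def Band (e : ℕ) : Set ℤ := {a | |a| ≤ e}

lemma Freq.add {n : ℕ → ℕ} {d : ℕ} {s : Finset ℕ} {m m' : ℕ} {a b : ℤ}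
    (ha : a ∈ Freq n d s m) (hb : b ∈ Freq n d s m') : a + b ∈ Freq n d s (m + m') := by
  obtain ⟨c, h1, h2, h3, rfl⟩ := ha
  obtain ⟨c', h1', h2', h3', rfl⟩ := hb
  refine ⟨c + c', ?_, ?_, ?_, ?_⟩
  · exact Finsupp.support_add.trans (Finset.union_subset h1 h1')
  · exact (Finset.card_le_card Finsupp.support_add).trans
      ((Finset.card_union_le _ _).trans (by omega))
  · intro i
    have := abs_add_le (c i) (c' i)
    have := h3 i
    have := h3' i
    simp only [Finsupp.add_apply]
    push_cast
    linarith
  · rw [Finsupp.sum_add_index'] <;> intros <;> simp [add_mul]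

/-- Dilated sums of a trigonometric polynomial of degree `d`. -/
lemma sum_pow_mem {n : ℕ → ℕ} {d : ℕ} {s : Finset ℕ} {g : ℝ → ℂ} (hg : g ∈ TrigPoly (Band d))
    (m : ℕ) : (fun x => (∑ i ∈ s, g (n i * x)) ^ m) ∈ TrigPoly (Freq n d s m) := by
  have h1 : (fun x => ∑ i ∈ s, g (n i * x)) ∈ TrigPoly (Freq n d s 1) := by
    have : (fun x => ∑ i ∈ s, g (n i * x)) = ∑ i ∈ s, fun x => g (n i * x) := by
      funext x; simp
    rw [this]
    refine Submodule.sum_mem _ fun i hi => TrigPoly.comp_mul ?_ hg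
    intro a ha
    refine ⟨Finsupp.single i a, ?_, ?_, ?_, ?_⟩
    · exact Finsupp.support_single_subset.trans (by simpa using hi)
    · exact (Finset.card_le_card Finsupp.support_single_subset).trans (by simp)
    · intro j
      rw [Finsupp.single_apply]
      split_ifs
      · simpa [Band] using ha
      · simp
    · simp
  induction m with
  | zero =>
    simp only [pow_zero]
    refine TrigPoly.one_mem ⟨0, by simp, by simp, by simp, by simp⟩
  | succ m ih =>
    simp only [pow_succ]
    exact TrigPoly.mul_mem (fun a ha b hb => Freq.add ha hb) ih h1

lemma pow_mem_band {d : ℕ} {g : ℝ → ℂ} (hg : g ∈ TrigPoly (Band d)) (q : ℕ) :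
    (fun x => g x ^ q) ∈ TrigPoly (Band (q * d)) := by
  induction q with
  | zero => simp only [pow_zero]; exact TrigPoly.one_mem (by simp [Band])
  | succ q ih =>
    simp only [pow_succ]
    refine TrigPoly.mul_mem (fun a ha b hb => ?_) ih hg
    simp only [Band, Set.mem_ofPred_eq] at *
    have := abs_add_le a b
    push_cast at *
    linarith

/-- Condition `A_ω` at level `M` rules out cancellation between the dilate `n k`, when `n k` is not
among the `M` smallest elements, and combinations of few other dilates. -/
lemma freq_no_cancel {ω : ℕ → ℝ} {n : ℕ → ℕ} {N₀ M p d : ℕ} (hA : CondAWith ω n N₀) (hM : N₀ ≤ M)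
    (hn : ∀ k, 0 < n k) (hp : (p : ℝ) ≤ ω M) (hd : ((p * d : ℕ) : ℝ) ≤ (M : ℝ) ^ ω M)
    {s : Finset ℕ} {k m q : ℕ} (hk : k ∉ s) (hkM : ¬ AmongSmallest n M k) (hmq : m + q ≤ p) :
    ∀ b ∈ Freq n d s m, ∀ a ∈ Band (q * d), b + a * n k = 0 → a = 0 := by
  rintro _ ⟨c, h1, h2, h3, rfl⟩ a ha hab
  by_contra ha0
  have hnk := hn k
  have hq : 0 < q := by
    rcases Nat.eq_zero_or_pos q with rfl | h
    · simp [Band] at ha; exact absurd ha ha0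
    · exact h
  have hck : k ∉ c.support := fun h => hk (h1 h)
  set c' : ℕ →₀ ℤ := c + Finsupp.single k a with hc'
  have hdisj : Disjoint c.support (Finsupp.single k a).support := by
    rw [Finsupp.support_single _ ha0]; simpa using hck
  have hsupp : c'.support = insert k c.support := by
    rw [hc', Finsupp.support_add_eq hdisj, Finsupp.support_single _ ha0]
    ext; simp
  have hcard : c'.support.card = c.support.card + 1 := by
    rw [hsupp, Finset.card_insert_of_notMem hck]
  have hsum : ∑ i ∈ c'.support, c' i * (n i : ℤ) = 0 := by
    rw [← hab]
    change (c'.sum fun i z => z * (n i : ℤ)) = _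
    rw [hc', Finsupp.sum_add_index'] <;> intros <;> simp [add_mul]
  have hbd : ∀ i, |c' i| ≤ (p * d : ℕ) := by
    intro i
    have hd0 : (0 : ℤ) ≤ d := by positivity
    have h4 := h3 i
    have h5 : |a| ≤ q * d := by simpa [Band] using ha
    have h6 : ((m : ℤ) + q) * d ≤ p * d := by
      gcongr; exact_mod_cast hmq
    have h7 : |c' i| ≤ |c i| + |a| := by
      rw [hc', Finsupp.add_apply, Finsupp.single_apply]
      refine (abs_add_le _ _).trans (add_le_add le_rfl ?_)
      split_ifs
      · exact le_rfl
      · simp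
    push_cast
    linarith
  by_cases hr : 2 ≤ c'.support.card
  · set e := c'.support.equivFin
    have hkmem : k ∈ c'.support := by rw [hsupp]; exact Finset.mem_insert_self _ _
    have := hA M hM c'.support.card (fun i => (e.symm i : ℕ)) (fun i => c' (e.symm i)) hr
      (le_trans (by exact_mod_cast (by omega)) hp)
      (fun i j hij => e.symm.injective (Subtype.ext hij))
      (fun i => Finsupp.mem_support_iff.mp (e.symm i).2)
      (fun i => le_trans (by exact_mod_cast hbd _) hd)
      (by
        rw [Equiv.sum_comp e.symm (fun i : c'.support => c' i * (n i : ℤ)),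
          Finset.sum_coe_sort c'.support (fun i => c' i * (n i : ℤ)), hsum])
      (e ⟨k, hkmem⟩)
    simp at this
    exact hkM this
  · have : c.support = ∅ := Finset.card_eq_zero.mp (by omega)
    have : c = 0 := Finsupp.support_eq_empty.mp this
    subst this
    simp at hab
    rcases hab with h | h
    · exact ha0 h
    · omega

/-- Binomial recursion for the moments of dilated sums: adding the dilate `n k` acts, up to
order `p`, like adding an independent variable. -/
lemma moment_rec {ω : ℕ → ℝ} {n : ℕ → ℕ} {N₀ M p d : ℕ} (hA : CondAWith ω n N₀) (hM : N₀ ≤ M)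
    (hn : ∀ k, 0 < n k) (hp : (p : ℝ) ≤ ω M) (hd : ((p * d : ℕ) : ℝ) ≤ (M : ℝ) ^ ω M)
    {g : ℝ → ℝ} (hg : (fun x => (g x : ℂ)) ∈ TrigPoly (Band d))
    {s : Finset ℕ} {k : ℕ} (hk : k ∉ s) (hkM : ¬ AmongSmallest n M k) {m : ℕ} (hm : m ≤ p) :
    ∫ x in (0:ℝ)..1, (∑ i ∈ insert k s, g (n i * x)) ^ m =
      ∑ q ∈ Finset.range (m + 1), (m.choose q : ℝ) *
        ((∫ x in (0:ℝ)..1, (∑ i ∈ s, g (n i * x)) ^ (m - q)) * ∫ x in (0:ℝ)..1, g x ^ q) := by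
  have hgc : Continuous g := by
    have := Complex.continuous_re.comp (TrigPoly.continuous hg)
    simpa [Function.comp_def] using this
  have key : ∀ q ∈ Finset.range (m + 1),
      ∫ x in (0:ℝ)..1, (∑ i ∈ s, g (n i * x)) ^ (m - q) * g (n k * x) ^ q =
      (∫ x in (0:ℝ)..1, (∑ i ∈ s, g (n i * x)) ^ (m - q)) * ∫ x in (0:ℝ)..1, g x ^ q := by
    intro q hq
    have hq : q ≤ m := by simpa [Nat.lt_succ_iff] using hq
    have := TrigPoly.integral_mul
      (freq_no_cancel hA hM hn hp hd hk hkM (show (m - q) + q ≤ p by omega))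
      (sum_pow_mem hg (m - q)) (pow_mem_band hg q)
    have e1 : ∀ φ : ℝ → ℝ, ((∫ x in (0:ℝ)..1, φ x : ℝ) : ℂ) = ∫ x in (0:ℝ)..1, (φ x : ℂ) :=
      fun φ => intervalIntegral.integral_ofReal.symm
    apply Complex.ofReal_injective
    rw [Complex.ofReal_mul, e1, e1, e1]
    push_cast
    exact this
  calc _ = ∫ x in (0:ℝ)..1, ∑ q ∈ Finset.range (m + 1), (m.choose q : ℝ) *
        ((∑ i ∈ s, g (n i * x)) ^ (m - q) * g (n k * x) ^ q) := by
        congr 1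
        funext x
        rw [Finset.sum_insert hk, add_pow]
        refine Finset.sum_congr rfl fun q _ => ?_
        ring
    _ = _ := by
        rw [intervalIntegral.integral_finsetSum]
        · refine Finset.sum_congr rfl fun q hq => ?_
          rw [intervalIntegral.integral_const_mul, key q hq]
        · intro q _
          apply Continuous.intervalIntegrable
          fun_prop

/-! ### Smoothing functions of bounded variation -/

lemma bdd_of_bv {f : ℝ → ℝ} (hper : ∀ x, f (x + 1) = f x)
    (hbv : BoundedVariationOn f (Set.Icc 0 1)) : ∃ K : ℝ, ∀ x, |f x| ≤ K := by
  refine ⟨|f 0| + (eVariationOn f (Set.Icc 0 1)).toReal, fun x => ?_⟩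
  have hp : Function.Periodic f 1 := hper
  have h1 : f (Int.fract x) = f x := by
    have := hp.sub_int_mul_eq (x := x) ⌊x⌋
    rwa [mul_one] at this
  have h2 := hbv.dist_le (x := Int.fract x) (y := 0)
    ⟨Int.fract_nonneg x, (Int.fract_lt_one x).le⟩ ⟨le_rfl, zero_le_one⟩
  rw [h1, Real.dist_eq] at h2
  have := abs_add_le (f x - f 0) (f 0)
  rw [sub_add_cancel] at this
  linarith

lemma bv_extend {f : ℝ → ℝ} (hper : ∀ x, f (x + 1) = f x)
    (hbv : BoundedVariationOn f (Set.Icc 0 1)) : BoundedVariationOn f (Set.Icc (-1) 2) := by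
  have h1 : eVariationOn f (Set.Icc (-1) 0) = eVariationOn f (Set.Icc 0 1) := by
    have := eVariationOn.comp_eq_of_monotoneOn f (t := Set.Icc (-1) 0) (fun x : ℝ => x + 1)
      (fun a _ b _ h => by simpa using h)
    rw [Set.image_add_const_Icc] at this
    norm_num at this
    rw [← this]
    congr 1
    funext x; simp [hper]
  have h2 : eVariationOn f (Set.Icc 1 2) = eVariationOn f (Set.Icc 0 1) := by
    have := eVariationOn.comp_eq_of_monotoneOn f (t := Set.Icc 0 1) (fun x : ℝ => x + 1)
      (fun a _ b _ h => by simpa using h)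
    rw [Set.image_add_const_Icc] at this
    norm_num at this
    rw [← this]
    congr 1
    funext x; simp [hper]
  have h3 := eVariationOn.Icc_add_Icc f (s := Set.univ) (a := (-1 : ℝ)) (b := 0) (c := 1)
    (by norm_num) (by norm_num) trivial
  have h4 := eVariationOn.Icc_add_Icc f (s := Set.univ) (a := (-1 : ℝ)) (b := 1) (c := 2)
    (by norm_num) (by norm_num) trivial
  simp only [Set.univ_inter] at h3 h4
  rw [BoundedVariationOn, ← h4, ← h3, h1, h2]
  exact ENNReal.add_ne_top.mpr ⟨ENNReal.add_ne_top.mpr ⟨hbv, hbv⟩, hbv⟩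

/-- By telescoping, `∫₀¹ (v (x + t) - v x) dx = ∫₀ᵗ (v (x + 1) - v x) dx`, and for monotone `v` the
first integrand has constant sign. -/
lemma mono_modulus {v : ℝ → ℝ} (hv : MonotoneOn v (Set.Icc (-1) 2)) {t : ℝ} (ht : |t| ≤ 1 / 2) :
    ∫ x in (0:ℝ)..1, |v (x + t) - v x| ≤ (v 2 - v (-1)) * |t| := by
  have ht' := abs_le.mp ht
  have hii : ∀ a b : ℝ, a ∈ Set.Icc (-1 : ℝ) 2 → b ∈ Set.Icc (-1 : ℝ) 2 →
      IntervalIntegrable v volume a b := fun a b ha hb =>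
    (hv.mono (Set.OrdConnected.uIcc_subset Set.ordConnected_Icc ha hb)).intervalIntegrable
  have hsh : IntervalIntegrable (fun x => v (x + t)) volume 0 1 := by
    have := (hii (0 + t) (1 + t) ⟨by linarith, by linarith⟩ ⟨by linarith, by linarith⟩).comp_add_right t
    simpa using this
  have h01 := hii 0 1 (by norm_num) (by norm_num)
  have key : |∫ x in (0:ℝ)..1, (v (x + t) - v x)| ≤ (v 2 - v (-1)) * |t| := by
    rw [intervalIntegral.integral_sub hsh h01, intervalIntegral.integral_comp_add_right]
    have a1 := intervalIntegral.integral_add_adjacent_intervals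
      (hii (0 + t) 0 ⟨by linarith, by linarith⟩ (by norm_num)) h01
    have a2 := intervalIntegral.integral_add_adjacent_intervals
      (hii (0 + t) 1 ⟨by linarith, by linarith⟩ (by norm_num))
      (hii 1 (1 + t) (by norm_num) ⟨by linarith, by linarith⟩)
    have a3 : ∫ x in (1:ℝ)..(1 + t), v x = ∫ x in (0:ℝ)..t, v (x + 1) := by
      rw [intervalIntegral.integral_comp_add_right]; simp [add_comm]
    have a4 : ∫ x in (0 + t)..(0:ℝ), v x = -∫ x in (0:ℝ)..t, v x := by
      rw [intervalIntegral.integral_symm]; simp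
    have hsh1 : IntervalIntegrable (fun x => v (x + 1)) volume 0 t := by
      have := (hii (0 + 1) (t + 1) (by norm_num) ⟨by linarith, by linarith⟩).comp_add_right 1
      simpa using this
    have e : (∫ x in (0 + t)..(1 + t), v x) - ∫ x in (0:ℝ)..1, v x
        = ∫ x in (0:ℝ)..t, (v (x + 1) - v x) := by
      rw [intervalIntegral.integral_sub hsh1 (hii 0 t (by norm_num) ⟨by linarith, by linarith⟩)]
      linarith
    rw [e]
    have := intervalIntegral.norm_integral_le_of_norm_le_const (a := 0) (b := t)
      (f := fun x => v (x + 1) - v x) (C := v 2 - v (-1)) (fun x hx => by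
        rcases Set.mem_uIoc.mp hx with hx | hx
        · have b1 := hv (a := x) (b := x + 1) ⟨by linarith, by linarith⟩
            ⟨by linarith, by linarith⟩ (by linarith)
          have b2 := hv (a := x + 1) (b := 2) ⟨by linarith, by linarith⟩ (by norm_num)
            (by linarith)
          have b3 := hv (a := -1) (b := x) (by norm_num) ⟨by linarith, by linarith⟩ (by linarith)
          rw [Real.norm_of_nonneg (by linarith)]
          linarith
        · have b1 := hv (a := x) (b := x + 1) ⟨by linarith, by linarith⟩
            ⟨by linarith, by linarith⟩ (by linarith)
          have b2 := hv (a := x + 1) (b := 2) ⟨by linarith, by linarith⟩ (by norm_num)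
            (by linarith)
          have b3 := hv (a := -1) (b := x) (by norm_num) ⟨by linarith, by linarith⟩ (by linarith)
          rw [Real.norm_of_nonneg (by linarith)]
          linarith)
    simpa using this
  rcases le_total 0 t with h0 | h0
  · have : ∫ x in (0:ℝ)..1, |v (x + t) - v x| = ∫ x in (0:ℝ)..1, (v (x + t) - v x) := by
      refine intervalIntegral.integral_congr fun x hx => ?_
      rw [Set.uIcc_of_le zero_le_one] at hx
      exact abs_of_nonneg (sub_nonneg.mpr (hv ⟨by linarith [hx.1], by linarith [hx.2]⟩
        ⟨by linarith [hx.1], by linarith [hx.2]⟩ (by linarith)))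
    rw [this]
    exact (le_abs_self _).trans key
  · have : ∫ x in (0:ℝ)..1, |v (x + t) - v x| = ∫ x in (0:ℝ)..1, -(v (x + t) - v x) := by
      refine intervalIntegral.integral_congr fun x hx => ?_
      rw [Set.uIcc_of_le zero_le_one] at hx
      exact abs_of_nonpos (sub_nonpos.mpr (hv ⟨by linarith [hx.1], by linarith [hx.2]⟩
        ⟨by linarith [hx.1], by linarith [hx.2]⟩ (by linarith)))
    rw [this, intervalIntegral.integral_neg]
    exact (neg_le_abs _).trans key

/-- Translations of a periodic function of bounded variation are Lipschitz in `L¹`. -/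
lemma bv_modulus {f : ℝ → ℝ} (hper : ∀ x, f (x + 1) = f x)
    (hbv : BoundedVariationOn f (Set.Icc 0 1)) :
    ∃ W : ℝ, ∀ t, |t| ≤ 1 / 2 → ∫ x in (0:ℝ)..1, |f (x + t) - f x| ≤ W * |t| := by
  obtain ⟨v, w, hv, hw, hf⟩ :=
    (bv_extend hper hbv).locallyBoundedVariationOn.exists_monotoneOn_sub_monotoneOn
  refine ⟨(v 2 - v (-1)) + (w 2 - w (-1)), fun t ht => ?_⟩
  have ht' := abs_le.mp ht
  have hii : ∀ v : ℝ → ℝ, MonotoneOn v (Set.Icc (-1) 2) →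
      IntervalIntegrable (fun x => |v (x + t) - v x|) volume 0 1 ∧
      IntervalIntegrable (fun x => v (x + t) - v x) volume 0 1 := by
    intro v hv
    have h01 : IntervalIntegrable v volume 0 1 := (hv.mono
      (Set.OrdConnected.uIcc_subset Set.ordConnected_Icc (by norm_num) (by norm_num))).intervalIntegrable
    have h2 : IntervalIntegrable v volume (0 + t) (1 + t) := (hv.mono
      (Set.OrdConnected.uIcc_subset Set.ordConnected_Icc ⟨by linarith, by linarith⟩
        ⟨by linarith, by linarith⟩)).intervalIntegrable
    have h3 : IntervalIntegrable (fun x => v (x + t)) volume 0 1 := by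
      simpa using h2.comp_add_right t
    exact ⟨(h3.sub h01).abs, h3.sub h01⟩
  calc ∫ x in (0:ℝ)..1, |f (x + t) - f x|
      ≤ ∫ x in (0:ℝ)..1, (|v (x + t) - v x| + |w (x + t) - w x|) := by
        refine intervalIntegral.integral_mono_on zero_le_one ?_
          ((hii v hv).1.add (hii w hw).1) fun x hx => ?_
        · have : (fun x => |f (x + t) - f x|) =
              fun x => |(v (x + t) - v x) - (w (x + t) - w x)| := by
            funext x; rw [hf]; simp only [Pi.sub_apply]; congr 1; ring
          rw [this]
          exact ((hii v hv).2.sub (hii w hw).2).abs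
        · have : f (x + t) - f x = (v (x + t) - v x) - (w (x + t) - w x) := by
            rw [hf]; simp only [Pi.sub_apply]; ring
          rw [this]
          exact abs_sub _ _
    _ = (∫ x in (0:ℝ)..1, |v (x + t) - v x|) + ∫ x in (0:ℝ)..1, |w (x + t) - w x| :=
        intervalIntegral.integral_add (hii v hv).1 (hii w hw).1
    _ ≤ _ := by
        rw [add_mul]
        exact add_le_add (mono_modulus hv ht) (mono_modulus hw ht)

/-- The unnormalised kernel `cos (π t) ^ (2 d)`, a nonnegative trigonometric polynomial of
degree `d` concentrated near the integers at scale `d ^ (-1/2)`. -/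
def cosKer (d : ℕ) (t : ℝ) : ℝ := cos (π * t) ^ (2 * d)

/-- The mass of the kernel over one period. -/
def kerMass (d : ℕ) : ℝ := ∫ t in (-(1/2):ℝ)..(1/2), cosKer d t

/-- The kernel average of `f`, a trigonometric polynomial of degree `d` approximating `f`. -/
def smooth (f : ℝ → ℝ) (d : ℕ) (x : ℝ) : ℝ :=
  (∫ t in (-(1/2):ℝ)..(1/2), f (x + t) * cosKer d t) / kerMass d

lemma cosKer_nonneg (d : ℕ) (t : ℝ) : 0 ≤ cosKer d t := by
  rw [cosKer, pow_mul]; positivity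

lemma cosKer_le_one (d : ℕ) (t : ℝ) : cosKer d t ≤ 1 := by
  rw [cosKer, pow_mul]; exact pow_le_one₀ (sq_nonneg _) (cos_sq_le_one _)

lemma continuous_cosKer (d : ℕ) : Continuous (cosKer d) := by
  unfold cosKer; fun_prop

lemma kerMass_pos (d : ℕ) : 0 < kerMass d := by
  refine intervalIntegral.intervalIntegral_pos_of_pos_on
    ((continuous_cosKer d).intervalIntegrable _ _) (fun t ht => ?_) (by norm_num)
  refine pow_pos (cos_pos_of_mem_Ioo ⟨?_, ?_⟩) _ <;> nlinarith [ht.1, ht.2, pi_pos]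

/-- The second moment of the kernel, from the Wallis recursion for `∫ cos ^ j`. -/
lemma cosKer_sin_sq (d : ℕ) :
    ∫ t in (-(1/2):ℝ)..(1/2), sin (π * t) ^ 2 * cosKer d t = kerMass d / (2 * d + 2) := by
  have h1 : ∀ j, ∫ t in (-(1/2):ℝ)..(1/2), cos (π * t) ^ j
      = π⁻¹ * ∫ t in (-(π/2))..(π/2), cos t ^ j := by
    intro j
    rw [intervalIntegral.integral_comp_mul_left (fun t => cos t ^ j) pi_ne_zero, smul_eq_mul]
    congr 2 <;> ring
  have h2 : ∫ t in (-(1/2):ℝ)..(1/2), cos (π * t) ^ (2 * d + 2)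
      = (2 * d + 1) / (2 * d + 2) * kerMass d := by
    simp only [kerMass, cosKer, h1]
    rw [integral_cos_pow]
    simp
    ring
  have h3 : ∀ t, sin (π * t) ^ 2 * cosKer d t = cosKer d t - cos (π * t) ^ (2 * d + 2) := by
    intro t
    rw [sin_sq, cosKer]; ring
  simp only [h3]
  rw [intervalIntegral.integral_sub ((continuous_cosKer d).intervalIntegrable _ _)
    (Continuous.intervalIntegrable (by fun_prop) _ _), h2]
  change kerMass d - _ = _
  field_simp
  ring

/-- First absolute moment of the kernel, from `cosKer_sin_sq`, the Jordan inequality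
`2 |t| ≤ |sin (π t)|` and `2 |s| ≤ r⁻¹ + r s ^ 2`. -/
lemma cosKer_abs (d : ℕ) :
    ∫ t in (-(1/2):ℝ)..(1/2), |t| * cosKer d t ≤ kerMass d / √(2 * d + 2) := by
  set r : ℝ := √(2 * d + 2) with hr
  have hr0 : 0 < r := Real.sqrt_pos.mpr (by positivity)
  have hr2 : r ^ 2 = 2 * d + 2 := Real.sq_sqrt (by positivity)
  have hc := continuous_cosKer d
  calc _ ≤ ∫ t in (-(1/2):ℝ)..(1/2), (r⁻¹ / 2 * cosKer d t + r / 2 * (sin (π * t) ^ 2 * cosKer d t)) := by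
        refine intervalIntegral.integral_mono_on (by norm_num)
          (Continuous.intervalIntegrable (by fun_prop) _ _)
          (Continuous.intervalIntegrable (by fun_prop) _ _) fun t ht => ?_
        have h1 : 2 / π * |π * t| ≤ |sin (π * t)| := by
          apply mul_abs_le_abs_sin
          rw [abs_mul, abs_of_pos pi_pos]
          have : |t| ≤ 1 / 2 := abs_le.mpr ht
          nlinarith [pi_pos]
        rw [abs_mul, abs_of_pos pi_pos, show 2 / π * (π * |t|) = 2 * |t| by field_simp] at h1
        have h2 : |t| ≤ r⁻¹ / 2 + r / 2 * sin (π * t) ^ 2 := by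
          rw [← sq_abs (sin _)]
          set S := |sin (π * t)|
          have hS : 0 ≤ S := abs_nonneg _
          have : 0 ≤ r⁻¹ * (1 - r * S) ^ 2 := by positivity
          have e : r⁻¹ * (1 - r * S) ^ 2 = r⁻¹ - 2 * S + r * S ^ 2 := by field_simp; ring
          linarith
        nlinarith [mul_le_mul_of_nonneg_right h2 (cosKer_nonneg d t)]
    _ = r⁻¹ / 2 * kerMass d + r / 2 * (kerMass d / (2 * d + 2)) := by
        rw [intervalIntegral.integral_add (Continuous.intervalIntegrable (by fun_prop) _ _)
          (Continuous.intervalIntegrable (by fun_prop) _ _),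
          intervalIntegral.integral_const_mul, intervalIntegral.integral_const_mul, cosKer_sin_sq]
        rfl
    _ = _ := by rw [← hr2]; field_simp; ring

/-- Fubini for bounded measurable integrands. -/
lemma swap_bdd {F : ℝ → ℝ → ℝ} (hF : Measurable (Function.uncurry F)) {B : ℝ}
    (hB : ∀ x t, |F x t| ≤ B) :
    IntervalIntegrable (fun x => ∫ t in (-(1/2):ℝ)..(1/2), F x t) volume 0 1 ∧
    ∫ x in (0:ℝ)..1, ∫ t in (-(1/2):ℝ)..(1/2), F x t
      = ∫ t in (-(1/2):ℝ)..(1/2), ∫ x in (0:ℝ)..1, F x t := by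
  have hi : Integrable (Function.uncurry F)
      ((volume.restrict (Set.Ioc (0:ℝ) 1)).prod (volume.restrict (Set.Ioc (-(1/2):ℝ) (1/2)))) :=
    Integrable.of_bound hF.aestronglyMeasurable B (Eventually.of_forall fun z => hB z.1 z.2)
  simp only [intervalIntegral.integral_of_le (show (-(1/2):ℝ) ≤ 1/2 by norm_num),
    intervalIntegral.integral_of_le (zero_le_one' ℝ)]
  exact ⟨by
    rw [intervalIntegrable_iff_integrableOn_Ioc_of_le zero_le_one]
    exact hi.integral_prod_left, integral_integral_swap hi⟩

lemma intervalIntegrable_of_bdd {F : ℝ → ℝ} (hF : Measurable F) {B : ℝ}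
    (hB : ∀ x, |F x| ≤ B) (a b : ℝ) : IntervalIntegrable F volume a b := by
  rw [intervalIntegrable_iff]
  exact Measure.integrableOn_of_bounded (by simp) hF.aestronglyMeasurable
    (Eventually.of_forall hB)

lemma measurable_shift_mul {f : ℝ → ℝ} (hf : Measurable f) (d : ℕ) :
    Measurable (Function.uncurry fun x t => f (x + t) * cosKer d t) :=
  (hf.comp (measurable_fst.add measurable_snd)).mul
    ((continuous_cosKer d).measurable.comp measurable_snd)

lemma abs_mul_cosKer_le {K y : ℝ} (hy : |y| ≤ K) (d : ℕ) (t : ℝ) : |y * cosKer d t| ≤ K := by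
  rw [abs_mul, abs_of_nonneg (cosKer_nonneg d t)]
  have := cosKer_le_one d t
  have := cosKer_nonneg d t
  nlinarith [abs_nonneg y]

lemma abs_smooth_le {f : ℝ → ℝ} {K : ℝ} (hK : ∀ x, |f x| ≤ K) (d : ℕ) (x : ℝ) :
    |smooth f d x| ≤ K := by
  rw [smooth, abs_div, abs_of_pos (kerMass_pos d), div_le_iff₀ (kerMass_pos d), kerMass,
    ← intervalIntegral.integral_const_mul, ← Real.norm_eq_abs]
  refine intervalIntegral.norm_integral_le_of_norm_le (by norm_num)
    (Eventually.of_forall fun t _ => ?_)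
    (((continuous_cosKer d).const_mul K).intervalIntegrable _ _)
  rw [Real.norm_eq_abs, abs_mul, abs_of_nonneg (cosKer_nonneg d t)]
  exact mul_le_mul_of_nonneg_right (hK _) (cosKer_nonneg d t)

lemma integral_shift {f : ℝ → ℝ} (hper : ∀ x, f (x + 1) = f x) (t : ℝ) :
    ∫ x in (0:ℝ)..1, f (x + t) = ∫ x in (0:ℝ)..1, f x := by
  have hp : Function.Periodic f 1 := hper
  rw [intervalIntegral.integral_comp_add_right, zero_add, add_comm 1 t,
    hp.intervalIntegral_add_eq t 0, zero_add]

lemma integral_smooth {f : ℝ → ℝ} (hf : Measurable f) (hper : ∀ x, f (x + 1) = f x) {K : ℝ}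
    (hK : ∀ x, |f x| ≤ K) (hmean : ∫ x in (0:ℝ)..1, f x = 0) (d : ℕ) :
    ∫ x in (0:ℝ)..1, smooth f d x = 0 := by
  simp only [smooth]
  rw [intervalIntegral.integral_div, (swap_bdd (measurable_shift_mul hf d) (B := K)
    (fun x t => abs_mul_cosKer_le (hK _) d t)).2]
  simp only [intervalIntegral.integral_mul_const, integral_shift hper, hmean]
  simp

lemma measurable_smooth {f : ℝ → ℝ} (hf : Measurable f) (d : ℕ) : Measurable (smooth f d) := by
  unfold smooth
  refine Measurable.div_const ?_ _
  simp only [intervalIntegral.integral_of_le (show (-(1/2):ℝ) ≤ 1/2 by norm_num)]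
  exact (measurable_shift_mul hf d).stronglyMeasurable.integral_prod_right.measurable

/-- Rate of approximation of `f` by its kernel average: average the `L¹` modulus of continuity of
`f` over the kernel. -/
lemma smooth_L1 {f : ℝ → ℝ} (hf : Measurable f) {K : ℝ} (hK : ∀ x, |f x| ≤ K) {W : ℝ}
    (hW0 : 0 ≤ W)
    (hW : ∀ t, |t| ≤ 1 / 2 → ∫ x in (0:ℝ)..1, |f (x + t) - f x| ≤ W * |t|) (d : ℕ) :
    ∫ x in (0:ℝ)..1, |f x - smooth f d x| ≤ W / √(2 * d + 2) := by
  have hm := kerMass_pos d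
  have hkc := continuous_cosKer d
  have hF : Measurable (Function.uncurry fun x t => |f (x + t) - f x| * cosKer d t) :=
    (((hf.comp (measurable_fst.add measurable_snd)).sub (hf.comp measurable_fst)).abs).mul
      (hkc.measurable.comp measurable_snd)
  have hB : ∀ x t, |f (x + t) - f x| ≤ 2 * K := fun x t =>
    (abs_sub _ _).trans (by linarith [hK x, hK (x + t)])
  obtain ⟨hi, hsw⟩ := swap_bdd hF (B := 2 * K)
    (fun x t => abs_mul_cosKer_le (by rw [abs_abs]; exact hB x t) d t)
  have hgm := measurable_smooth hf d
  calc ∫ x in (0:ℝ)..1, |f x - smooth f d x|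
      ≤ ∫ x in (0:ℝ)..1, (∫ t in (-(1/2):ℝ)..(1/2), |f (x + t) - f x| * cosKer d t) / kerMass d := by
        refine intervalIntegral.integral_mono_on zero_le_one ?_ (hi.div_const _) fun x _ => ?_
        · exact intervalIntegrable_of_bdd (hf.sub hgm).abs (B := 2 * K) (fun x => by
            rw [abs_abs]
            refine (abs_sub _ _).trans ?_
            have := abs_smooth_le hK d x
            linarith [hK x]) _ _
        · have e : f x - smooth f d x =
              -((∫ t in (-(1/2):ℝ)..(1/2), (f (x + t) - f x) * cosKer d t) / kerMass d) := by
            have h1 : IntervalIntegrable (fun t => f (x + t) * cosKer d t) volume (-(1/2)) (1/2) :=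
              intervalIntegrable_of_bdd ((hf.comp (measurable_const_add x)).mul hkc.measurable)
                (fun t => abs_mul_cosKer_le (hK _) d t) _ _
            simp only [sub_mul]
            rw [intervalIntegral.integral_sub h1
              ((hkc.const_mul (f x)).intervalIntegrable _ _),
              intervalIntegral.integral_const_mul, ← kerMass, smooth]
            field_simp
            ring
          rw [e, abs_neg, abs_div, abs_of_pos hm]
          gcongr
          refine (intervalIntegral.abs_integral_le_integral_abs (by norm_num)).trans
            (le_of_eq ?_)
          simp only [abs_mul, abs_of_nonneg (cosKer_nonneg d _)]
    _ = (∫ t in (-(1/2):ℝ)..(1/2), (∫ x in (0:ℝ)..1, |f (x + t) - f x|) * cosKer d t) / kerMass d := by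
        rw [intervalIntegral.integral_div, hsw]
        simp only [intervalIntegral.integral_mul_const]
    _ ≤ (∫ t in (-(1/2):ℝ)..(1/2), W * (|t| * cosKer d t)) / kerMass d := by
        gcongr
        refine intervalIntegral.integral_mono_on (by norm_num) ?_
          (Continuous.intervalIntegrable (by fun_prop) _ _) fun t ht => ?_
        · have hm2 : Measurable fun t => ∫ x in (0:ℝ)..1, |f (x + t) - f x| := by
            simp only [intervalIntegral.integral_of_le (zero_le_one' ℝ)]
            have : Measurable (Function.uncurry fun t x => |f (x + t) - f x|) :=
              ((hf.comp (measurable_snd.add measurable_fst)).sub (hf.comp measurable_snd)).abs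
            exact this.stronglyMeasurable.integral_prod_right.measurable
          refine intervalIntegrable_of_bdd (hm2.mul hkc.measurable) (B := 2 * K) (fun t => ?_) _ _
          refine abs_mul_cosKer_le ?_ d t
          have := intervalIntegral.norm_integral_le_of_norm_le_const (a := 0) (b := 1)
            (f := fun x => |f (x + t) - f x|) (C := 2 * K) (fun x _ => by
              rw [Real.norm_eq_abs, abs_abs]; exact hB x t)
          simpa using this
        · rw [← mul_assoc]
          exact mul_le_mul_of_nonneg_right (hW t (abs_le.mpr ht)) (cosKer_nonneg d t)
    _ ≤ (W * (kerMass d / √(2 * d + 2))) / kerMass d := by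
        rw [intervalIntegral.integral_const_mul]
        gcongr
        exact cosKer_abs d
    _ = _ := by field_simp

/-- Binomial expansion of the kernel into characters. -/
lemma cosKer_eq (d : ℕ) (s : ℝ) : (cosKer d s : ℂ) =
    ∑ k ∈ Finset.range (2 * d + 1), ((2 * d).choose k / 4 ^ d : ℂ) * chr ((k : ℤ) - d) s := by
  rw [cosKer]
  push_cast
  rw [Complex.cos, div_pow, add_pow, Finset.sum_div]
  refine Finset.sum_congr rfl fun k hk => ?_
  have hk : k ≤ 2 * d := by simpa [Nat.lt_succ_iff] using hk
  rw [← Complex.exp_nat_mul, ← Complex.exp_nat_mul, ← Complex.exp_add, pow_mul, chr]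
  norm_num
  rw [mul_comm, ← mul_div_right_comm]
  congr 3
  push_cast [Nat.cast_sub hk]
  ring

/-- The kernel average is a trigonometric polynomial of degree `d`, because it is a convolution
over a full period with the trigonometric polynomial `cosKer d`. -/
lemma smooth_mem {f : ℝ → ℝ} (hf : Measurable f) (hper : ∀ x, f (x + 1) = f x) {K : ℝ}
    (hK : ∀ x, |f x| ≤ K) (d : ℕ) : (fun x => (smooth f d x : ℂ)) ∈ TrigPoly (Band d) := by
  have key : (fun x => (smooth f d x : ℂ)) = ∑ k ∈ Finset.range (2 * d + 1),
      ((2 * d).choose k / 4 ^ d * (∫ u in (0:ℝ)..1, (f u : ℂ) * chr ((k : ℤ) - d) u)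
        / kerMass d : ℂ) • chr ((d : ℤ) - k) := by
    funext x
    have h1 : ∫ t in (-(1/2):ℝ)..(1/2), f (x + t) * cosKer d t
        = ∫ u in (0:ℝ)..1, f u * cosKer d (u - x) := by
      have hp : Function.Periodic (fun u => f u * cosKer d (u - x)) 1 := by
        intro u
        simp only [hper, cosKer]
        rw [show π * (u + 1 - x) = π * (u - x) + π by ring, cos_add_pi, pow_mul, neg_sq, ← pow_mul]
      have := intervalIntegral.integral_comp_add_left (fun u => f u * cosKer d (u - x)) x
        (a := -(1/2)) (b := 1/2)
      simp only [add_sub_cancel_left] at this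
      rw [this, show x + 1 / 2 = (x + -(1 / 2)) + 1 by ring, hp.intervalIntegral_add_eq _ 0,
        zero_add]
    have h2 : ((∫ u in (0:ℝ)..1, f u * cosKer d (u - x) : ℝ) : ℂ) =
        ∑ k ∈ Finset.range (2 * d + 1), ((2 * d).choose k / 4 ^ d : ℂ) *
          ((∫ u in (0:ℝ)..1, (f u : ℂ) * chr ((k : ℤ) - d) u) * chr ((d : ℤ) - k) x) := by
      rw [← intervalIntegral.integral_ofReal]
      have e : ∀ u : ℝ, ((f u * cosKer d (u - x) : ℝ) : ℂ) = ∑ k ∈ Finset.range (2 * d + 1),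
          ((2 * d).choose k / 4 ^ d : ℂ) *
            (((f u : ℂ) * chr ((k : ℤ) - d) u) * chr ((d : ℤ) - k) x) := by
        intro u
        push_cast
        rw [cosKer_eq, Finset.mul_sum]
        refine Finset.sum_congr rfl fun k _ => ?_
        have : chr ((k : ℤ) - d) (u - x) = chr ((k : ℤ) - d) u * chr ((d : ℤ) - k) x := by
          simp only [chr, ← Complex.exp_add]
          congr 1; push_cast; ring
        rw [this]; ring
      simp only [e]
      have hfi : IntervalIntegrable (fun u => (f u : ℂ)) volume 0 1 :=
        ⟨(intervalIntegrable_of_bdd hf hK 0 1).1.ofReal, (intervalIntegrable_of_bdd hf hK 0 1).2.ofReal⟩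
      rw [intervalIntegral.integral_finsetSum]
      · simp only [intervalIntegral.integral_const_mul, intervalIntegral.integral_mul_const]
      · intro k _
        exact ((hfi.mul_continuousOn (continuous_chr _).continuousOn).mul_const _).const_mul _
    rw [smooth, Complex.ofReal_div, h1, h2, Finset.sum_div, Finset.sum_apply]
    refine Finset.sum_congr rfl fun k _ => ?_
    simp only [Pi.smul_apply, smul_eq_mul]
    ring
  rw [key]
  refine Submodule.sum_mem _ fun k hk => Submodule.smul_mem _ _ (TrigPoly.chr_mem ?_)
  have hk : k ≤ 2 * d := by simpa [Nat.lt_succ_iff] using hk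
  simp only [Band, Set.mem_ofPred_eq, abs_le]
  omega

/-! ### The moment estimate -/

lemma integral_dilate {φ : ℝ → ℝ} (hper : ∀ x, φ (x + 1) = φ x)
    (hi : ∀ a b, IntervalIntegrable φ volume a b) {m : ℕ} (hm : 0 < m) :
    ∫ x in (0:ℝ)..1, φ (m * x) = ∫ x in (0:ℝ)..1, φ x := by
  have hp : Function.Periodic φ 1 := hper
  have hm' : (m : ℝ) ≠ 0 := by positivity
  have h := hp.intervalIntegral_add_zsmul_eq m 0 hi
  rw [intervalIntegral.integral_comp_mul_left _ hm']
  simp only [zero_add, zsmul_eq_mul, Int.cast_natCast, mul_one] at h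
  rw [mul_zero, mul_one, h, smul_eq_mul]
  field_simp

lemma integral_pow_sub_le {S T : ℝ → ℝ} (hS : Measurable S) (hT : Measurable T) {B η : ℝ}
    (hSB : ∀ x, |S x| ≤ B) (hTB : ∀ x, |T x| ≤ B) (h : ∫ x in (0:ℝ)..1, |S x - T x| ≤ η) (p : ℕ) :
    |(∫ x in (0:ℝ)..1, S x ^ p) - ∫ x in (0:ℝ)..1, T x ^ p| ≤ p * B ^ (p - 1) * η := by
  have hB : 0 ≤ B := (abs_nonneg _).trans (hSB 0)
  have hi : ∀ {U : ℝ → ℝ}, Measurable U → (∀ x, |U x| ≤ B) →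
      IntervalIntegrable (fun x => U x ^ p) volume 0 1 := fun hU hUB =>
    intervalIntegrable_of_bdd (hU.pow_const p) (B := B ^ p)
      (fun x => by rw [abs_pow]; exact pow_le_pow_left₀ (abs_nonneg _) (hUB x) p) _ _
  have hi1 : IntervalIntegrable (fun x => |S x - T x|) volume 0 1 :=
    intervalIntegrable_of_bdd (hS.sub hT).abs (B := B + B) (fun x => by
      rw [abs_abs]; exact (abs_sub _ _).trans (add_le_add (hSB x) (hTB x))) _ _
  rw [← intervalIntegral.integral_sub (hi hS hSB) (hi hT hTB), ← Real.norm_eq_abs]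
  calc _ ≤ ∫ x in (0:ℝ)..1, p * B ^ (p - 1) * |S x - T x| := by
        refine intervalIntegral.norm_integral_le_of_norm_le zero_le_one
          (Eventually.of_forall fun x _ => ?_) (hi1.const_mul _)
        rw [Real.norm_eq_abs]
        refine (abs_pow_sub_pow_le _ _ p).trans ?_
        have : max |S x| |T x| ≤ B := max_le (hSB x) (hTB x)
        calc |S x - T x| * p * max |S x| |T x| ^ (p - 1) ≤ |S x - T x| * p * B ^ (p - 1) := by
              gcongr
          _ = _ := by ring
    _ ≤ _ := by
        rw [intervalIntegral.integral_const_mul]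
        gcongr

lemma abs_integral_pow_le {U : ℝ → ℝ} {B : ℝ} (hU : ∀ x, |U x| ≤ B) (m : ℕ) :
    |∫ x in (0:ℝ)..1, U x ^ m| ≤ B ^ m := by
  have := intervalIntegral.norm_integral_le_of_norm_le_const (a := 0) (b := 1)
    (f := fun x => U x ^ m) (C := B ^ m) (fun x _ => by
      rw [Real.norm_eq_abs, abs_pow]; exact pow_le_pow_left₀ (abs_nonneg _) (hU x) m)
  simpa using this

lemma card_amongSmallest_le {n : ℕ → ℕ} (hn : Function.Injective n) (M : ℕ) (B : Finset ℕ)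
    (hB : ∀ k ∈ B, AmongSmallest n M k) : B.card ≤ M := by
  rcases B.eq_empty_or_nonempty with rfl | hne
  · simp
  obtain ⟨k, hk, hmax⟩ := B.exists_max_image n hne
  have hfin : {j : ℕ | n j ≤ n k}.Finite := (Set.finite_Iic (n k)).preimage hn.injOn
  have hsub : (B : Set ℕ) ⊆ {j : ℕ | n j ≤ n k} := fun j hj => hmax j hj
  have := Set.ncard_le_ncard hsub hfin
  rw [Set.ncard_coe_finset] at this
  exact this.trans (hB k hk)

lemma abs_sum_dilate_le {g : ℝ → ℝ} {K : ℝ} (hK : ∀ x, |g x| ≤ K) (n : ℕ → ℕ) (s : Finset ℕ)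
    (x : ℝ) : |∑ i ∈ s, g (n i * x)| ≤ s.card * K := by
  refine (Finset.abs_sum_le_sum_abs _ _).trans ?_
  refine (Finset.sum_le_card_nsmul _ _ K fun i _ => hK _).trans ?_
  simp

/-- The moment estimate for a trigonometric polynomial `g` of degree `d` in place of `f`. -/
lemma trig_moment {ω : ℕ → ℝ} {n : ℕ → ℕ} {N₀ M p d N : ℕ} (hA : CondAWith ω n N₀) (hM : N₀ ≤ M)
    (hn : ∀ k, 0 < n k) (hinj : Function.Injective n)
    (hp : (p : ℝ) ≤ ω M) (hd : ((p * d : ℕ) : ℝ) ≤ (M : ℝ) ^ ω M) (hp2 : 2 ≤ p) (hM1 : 1 ≤ M)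
    (hMN : M ^ 4 ≤ N) {g : ℝ → ℝ} {K : ℝ} (hK1 : 1 ≤ K) (hK : ∀ x, |g x| ≤ K)
    (hper : ∀ x, g (x + 1) = g x) (hmean : ∫ x in (0:ℝ)..1, g x = 0)
    (hg : (fun x => (g x : ℂ)) ∈ TrigPoly (Band d)) :
    |∫ x in (0:ℝ)..1, (∑ i ∈ Finset.range N, g (n i * x)) ^ 2| ≤ 2 * K ^ 2 * √N ^ 2 ∧
    |(∫ x in (0:ℝ)..1, (∑ i ∈ Finset.range N, g (n i * x)) ^ p) -
      gaussMoment p (∫ x in (0:ℝ)..1, (∑ i ∈ Finset.range N, g (n i * x)) ^ 2)|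
      ≤ 8 ^ p * p.factorial * K ^ p * √N ^ p / √N := by
  classical
  have hgc : Continuous g := by
    have := Complex.continuous_re.comp (TrigPoly.continuous hg)
    simpa [Function.comp_def] using this
  -- The dilates are split into the at most `M` resonant ones `B`, which form the starting variable
  -- of `moment_comparison`, and the others `G`, which are added one at a time.
  set B := (Finset.range N).filter (fun k => AmongSmallest n M k) with hB
  set G := (Finset.range N).filter (fun k => ¬ AmongSmallest n M k) with hG
  have hBG : B ∪ G = Finset.range N := Finset.filter_union_filter_not_eq _ _
  have hBM : B.card ≤ M := card_amongSmallest_le hinj M B fun k hk => (Finset.mem_filter.mp hk).2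
  have hN1 : 1 ≤ N := (Nat.one_le_pow _ _ hM1).trans hMN
  have hNr : (1 : ℝ) ≤ N := by exact_mod_cast hN1
  have hsq : √(N : ℝ) ^ 2 = N := Real.sq_sqrt (by positivity)
  have := moment_comparison (√N) M K hK1 (Real.one_le_sqrt.mpr hNr) (by exact_mod_cast hM1)
    (Real.le_sqrt_of_sq_le (by rw [← pow_mul]; exact_mod_cast hMN)) p hp2 G
    (by
      rw [hsq]
      have := (Finset.card_filter_le (Finset.range N) (fun k => ¬ AmongSmallest n M k))
      rw [Finset.card_range] at this
      exact_mod_cast this)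
    (fun s m => ∫ x in (0:ℝ)..1, (∑ i ∈ B ∪ s, g (n i * x)) ^ m)
    (fun q => ∫ x in (0:ℝ)..1, g x ^ q) (by simp) (by simpa using hmean)
    (fun q => abs_integral_pow_le hK q) (by simp)
    (by
      simp only [Finset.union_empty, pow_one]
      rw [intervalIntegral.integral_finsetSum]
      · refine Finset.sum_eq_zero fun i _ => ?_
        rw [integral_dilate hper (fun a b => hgc.intervalIntegrable a b) (hn i), hmean]
      · intro i _
        exact Continuous.intervalIntegrable (by fun_prop) _ _)
    (fun m => by
      refine abs_integral_pow_le (fun x => ?_) m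
      refine (abs_sum_dilate_le hK n _ x).trans ?_
      rw [Finset.union_empty]
      gcongr)
    (fun k s hk hs m hm => by
      have hkG : k ∈ G := hs (Finset.mem_insert_self _ _)
      have hkM : ¬ AmongSmallest n M k := (Finset.mem_filter.mp hkG).2
      have hkB : k ∉ B ∪ s := by
        rw [Finset.mem_union]
        rintro (h | h)
        · exact hkM (Finset.mem_filter.mp h).2
        · exact hk h
      rw [Finset.union_insert]
      exact moment_rec hA hM hn hp hd hg hkB hkM hm)
  rwa [hBG] at this

/-- The factorial and the powers of `K` are absorbed by `exp (p ^ 2)`, with a constant depending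
only on `K`. -/
lemma const_bound {K : ℝ} (hK : 1 ≤ K) (p : ℕ) :
    4 * (16 * K) ^ p * p.factorial ≤ 4 * exp (16 * K) * exp ((p : ℝ) ^ 2) := by
  have hf : (0 : ℝ) < p.factorial := by exact_mod_cast p.factorial_pos
  have h1 : (16 * K) ^ p ≤ exp (16 * K) * p.factorial := by
    rw [← div_le_iff₀ hf]
    exact Real.pow_div_factorial_le_exp _ (by linarith) p
  have h2 : (p : ℝ) ≤ exp ((p : ℝ) / 2) := by
    have h3 := Real.add_one_le_exp ((p : ℝ) / 4)
    have h4 : exp ((p : ℝ) / 2) = exp ((p : ℝ) / 4) ^ 2 := by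
      rw [← Real.exp_nat_mul]; congr 1; push_cast; ring
    rw [h4]
    have : (0 : ℝ) ≤ p := by positivity
    nlinarith [sq_nonneg ((p : ℝ) / 4 - 1)]
  have h3 : (p.factorial : ℝ) ≤ exp ((p : ℝ) / 2) ^ p :=
    calc (p.factorial : ℝ) ≤ (p : ℝ) ^ p := by exact_mod_cast Nat.factorial_le_pow p
      _ ≤ _ := by gcongr
  have h4 : exp ((p : ℝ) / 2) ^ p * exp ((p : ℝ) / 2) ^ p = exp ((p : ℝ) ^ 2) := by
    rw [← Real.exp_nat_mul, ← Real.exp_add]; congr 1; ring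
  calc 4 * (16 * K) ^ p * p.factorial ≤ 4 * (exp (16 * K) * p.factorial) * p.factorial := by gcongr
    _ = 4 * exp (16 * K) * (p.factorial * p.factorial) := by ring
    _ ≤ 4 * exp (16 * K) * (exp ((p : ℝ) / 2) ^ p * exp ((p : ℝ) / 2) ^ p) := by gcongr
    _ = _ := by rw [h4]

/-- Crude Lipschitz bound for the Gaussian moments as functions of the variance. -/
lemma gaussMoment_lipschitz {v w Y η : ℝ} (hv : |v| ≤ Y) (hw : |w| ≤ Y) (h : |w - v| ≤ η)
    (p : ℕ) : |gaussMoment p v - gaussMoment p w| ≤ p.factorial * p * Y ^ (p / 2 - 1) * η := by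
  have hY : 0 ≤ Y := (abs_nonneg _).trans hv
  have hη : 0 ≤ η := (abs_nonneg _).trans h
  rcases Nat.even_or_odd' p with ⟨l, rfl | rfl⟩
  · rw [gaussMoment_even, gaussMoment_even, ← mul_sub, abs_mul, abs_of_nonneg (by positivity),
      Nat.mul_div_cancel_left l (by norm_num)]
    have h1 : (((2 * l).factorial : ℝ) / (l.factorial * 2 ^ l)) ≤ (2 * l).factorial := by
      refine div_le_self (by positivity) ?_
      have : (1 : ℝ) ≤ l.factorial := by exact_mod_cast l.factorial_pos
      have : (1 : ℝ) ≤ 2 ^ l := one_le_pow₀ (by norm_num)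
      nlinarith
    have h2 : |v ^ l - w ^ l| ≤ η * (2 * l : ℕ) * Y ^ (l - 1) := by
      refine (abs_pow_sub_pow_le v w l).trans ?_
      have h3 : max |v| |w| ≤ Y := max_le hv hw
      have h4 : (l : ℝ) ≤ (2 * l : ℕ) := by exact_mod_cast (by omega)
      rw [abs_sub_comm v w]
      gcongr
    calc _ ≤ ((2 * l).factorial : ℝ) * (η * (2 * l : ℕ) * Y ^ (l - 1)) := by gcongr
      _ = _ := by ring
  · rw [gaussMoment_odd ⟨l, rfl⟩, gaussMoment_odd ⟨l, rfl⟩]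
    simp; positivity

/-- The moment estimate with all constants explicit: `K` bounds `f` and its `L¹` modulus of
continuity, and `M` plays the role of `⌊N ^ (1/4)⌋`. -/
lemma core {ω : ℕ → ℝ} {n : ℕ → ℕ} {N₀ M p N : ℕ} (hA : CondAWith ω n N₀) (hM : N₀ ≤ M)
    (hn : ∀ k, 0 < n k) (hinj : Function.Injective n)
    (hp : 8 * (p : ℝ) ≤ ω M) (hp3 : 3 ≤ p) (hM4 : 4 ≤ M)
    (hMN : M ^ 4 ≤ N) (hNM : N < (M + 1) ^ 4) {f : ℝ → ℝ} (hf : Measurable f) {K : ℝ} (hK1 : 1 ≤ K)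
    (hK : ∀ x, |f x| ≤ K)
    (hper : ∀ x, f (x + 1) = f x) (hmean : ∫ x in (0:ℝ)..1, f x = 0)
    (hW : ∀ t, |t| ≤ 1 / 2 → ∫ x in (0:ℝ)..1, |f (x + t) - f x| ≤ K * |t|) :
    |(∫ x in (0:ℝ)..1, (∑ i ∈ Finset.range N, f (n i * x)) ^ p) -
      gaussMoment p (∫ x in (0:ℝ)..1, (∑ i ∈ Finset.range N, f (n i * x)) ^ 2)|
      ≤ 4 * (16 * K) ^ p * p.factorial * √N ^ (p - 1) := by
  have hM1 : 1 ≤ M := by omega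
  have hMr : (1 : ℝ) ≤ M := by exact_mod_cast hM1
  -- The degree `d` is large enough for `√d` to beat `N ^ ((p + 1) / 2)`, and small enough for the
  -- frequencies of `p`-fold products to stay within the range `M ^ ω M` of the Diophantine condition.
  set d := M ^ (7 * p) with hd
  have hpd : ((p * d : ℕ) : ℝ) ≤ (M : ℝ) ^ ω M := by
    have h1 : p * d ≤ M ^ (8 * p) := by
      calc p * d ≤ M ^ p * M ^ (7 * p) :=
            Nat.mul_le_mul_right _ (Nat.lt_pow_self (by omega)).le
        _ = _ := by rw [← pow_add]; congr 1; omega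
    calc ((p * d : ℕ) : ℝ) ≤ ((M ^ (8 * p) : ℕ) : ℝ) := by exact_mod_cast h1
      _ = (M : ℝ) ^ (8 * (p : ℝ)) := by
          rw [Nat.cast_pow, ← Real.rpow_natCast]; push_cast; rfl
      _ ≤ _ := Real.rpow_le_rpow_of_exponent_le hMr hp
  have hNd : N ^ (p + 1) ≤ d := by
    have h5 : N ≤ M ^ 5 := by
      refine hNM.le.trans ?_
      have h1 : 4 * (M + 1) ≤ 5 * M := by omega
      have h2 : (4 * (M + 1)) ^ 4 ≤ (5 * M) ^ 4 := Nat.pow_le_pow_left h1 4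
      rw [mul_pow, mul_pow] at h2
      have h3 : M ^ 5 = M * M ^ 4 := by ring
      have h4 : 4 * M ^ 4 ≤ M * M ^ 4 := Nat.mul_le_mul_right _ hM4
      omega
    calc N ^ (p + 1) ≤ (M ^ 5) ^ (p + 1) := Nat.pow_le_pow_left h5 _
      _ = M ^ (5 * (p + 1)) := (pow_mul _ _ _).symm
      _ ≤ _ := Nat.pow_le_pow_right hM1 (by omega)
  set g := smooth f d with hgdef
  have hgK : ∀ x, |g x| ≤ K := abs_smooth_le hK d
  have hgper : ∀ x, g (x + 1) = g x := by
    intro x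
    simp only [hgdef, smooth]
    congr 2
    funext t
    rw [add_right_comm, hper]
  have hgm : Measurable g := measurable_smooth hf d
  obtain ⟨hv, hmain⟩ := trig_moment hA hM hn hinj (p := p) (d := d) (N := N)
    (by have : (0 : ℝ) ≤ p := by positivity
        linarith) hpd (by omega) hM1 hMN hK1 hgK
    hgper (integral_smooth hf hper hK hmean d) (smooth_mem hf hper hK d)
  have hN1 : 1 ≤ N := (Nat.one_le_pow _ _ hM1).trans hMN
  set R := √(N : ℝ) with hR
  have hR1 : 1 ≤ R := Real.one_le_sqrt.mpr (by exact_mod_cast hN1)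
  have hR0 : 0 < R := by linarith
  have hRN : (N : ℝ) = R ^ 2 := (Real.sq_sqrt (by positivity)).symm
  -- The `L¹` distance between `f` and `g` is at most `K / √d ≤ K / R ^ (p + 1)`.
  have heps : ∫ x in (0:ℝ)..1, |f x - g x| ≤ K / R ^ (p + 1) := by
    refine (smooth_L1 hf hK (by linarith) hW d).trans ?_
    have : R ^ (p + 1) ≤ √(2 * d + 2) := by
      apply Real.le_sqrt_of_sq_le
      rw [← pow_mul, mul_comm (p + 1) 2, pow_mul, ← hRN]
      have : (N : ℝ) ^ (p + 1) ≤ d := by exact_mod_cast hNd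
      have : (0 : ℝ) ≤ d := by positivity
      linarith
    gcongr
  set S : ℝ → ℝ := fun x => ∑ i ∈ Finset.range N, f (n i * x) with hS
  set T : ℝ → ℝ := fun x => ∑ i ∈ Finset.range N, g (n i * x) with hT
  have hSB : ∀ x, |S x| ≤ R ^ 2 * K := fun x => by
    have := abs_sum_dilate_le hK n (Finset.range N) x
    rwa [Finset.card_range, hRN] at this
  have hTB : ∀ x, |T x| ≤ R ^ 2 * K := fun x => by
    have := abs_sum_dilate_le hgK n (Finset.range N) x
    rwa [Finset.card_range, hRN] at this
  have hSm : Measurable S := by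
    refine Finset.measurable_sum _ fun i _ => hf.comp (measurable_const_mul _)
  have hTm : Measurable T := by
    refine Finset.measurable_sum _ fun i _ => hgm.comp (measurable_const_mul _)
  have hdb : ∀ x, |f x - g x| ≤ 2 * K := fun x =>
    (abs_sub _ _).trans (by linarith [hK x, hgK x])
  have hST : ∫ x in (0:ℝ)..1, |S x - T x| ≤ R ^ 2 * (K / R ^ (p + 1)) := by
    have hii : ∀ i : ℕ, IntervalIntegrable (fun x => |f (n i * x) - g (n i * x)|) volume 0 1 :=
      fun i => intervalIntegrable_of_bdd (((hf.sub hgm).abs).comp (measurable_const_mul (n i : ℝ)))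
        (B := 2 * K) (fun x => by simp only [Function.comp, abs_abs]; exact hdb _) _ _
    calc _ ≤ ∫ x in (0:ℝ)..1, ∑ i ∈ Finset.range N, |f (n i * x) - g (n i * x)| := by
          refine intervalIntegral.integral_mono_on zero_le_one ?_ ?_ fun x _ => ?_
          · exact intervalIntegrable_of_bdd (hSm.sub hTm).abs (B := R ^ 2 * K + R ^ 2 * K)
              (fun x => by
                rw [abs_abs]
                exact (abs_sub _ _).trans (add_le_add (hSB x) (hTB x))) _ _
          · simp only [intervalIntegrable_iff, IntegrableOn] at hii ⊢
            exact integrable_finsetSum _ fun i _ => hii i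
          · simp only [hS, hT, ← Finset.sum_sub_distrib]
            exact Finset.abs_sum_le_sum_abs _ _
      _ = ∑ i ∈ Finset.range N, ∫ x in (0:ℝ)..1, |f x - g x| := by
          rw [intervalIntegral.integral_finsetSum fun i _ => hii i]
          refine Finset.sum_congr rfl fun i _ => ?_
          exact integral_dilate (φ := fun x => |f x - g x|) (fun x => by rw [hper, hgper])
            (intervalIntegrable_of_bdd (hf.sub hgm).abs (B := 2 * K)
              (fun x => by rw [abs_abs]; exact hdb x)) (hn i)
      _ ≤ _ := by
          rw [Finset.sum_const, Finset.card_range, nsmul_eq_mul, hRN]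
          gcongr
  have c1 := integral_pow_sub_le hSm hTm hSB hTB hST p
  have c2 := integral_pow_sub_le hSm hTm hSB hTB hST 2
  obtain ⟨r, rfl⟩ : ∃ r, p = r + 3 := ⟨p - 3, by omega⟩
  have hKp : (1 : ℝ) ≤ K ^ 2 := one_le_pow₀ hK1
  have c1' : (((r + 3 : ℕ) : ℝ)) * (R ^ 2 * K) ^ (r + 3 - 1) * (R ^ 2 * (K / R ^ (r + 3 + 1)))
      = (r + 3 : ℕ) * K ^ (r + 3) * R ^ (r + 2) := by
    rw [show r + 3 - 1 = r + 2 by omega, mul_pow, ← pow_mul]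
    field_simp
    ring
  have c2' : (((2 : ℕ) : ℝ)) * (R ^ 2 * K) ^ (2 - 1) * (R ^ 2 * (K / R ^ (r + 3 + 1)))
      ≤ 2 * K ^ 2 := by
    have : (((2 : ℕ) : ℝ)) * (R ^ 2 * K) ^ (2 - 1) * (R ^ 2 * (K / R ^ (r + 3 + 1)))
        = 2 * K ^ 2 / R ^ r := by
      norm_num
      field_simp
      ring
    rw [this]
    exact div_le_self (by positivity) (one_le_pow₀ hR1)
  rw [c1'] at c1
  have c2 := c2.trans c2'
  set v := ∫ x in (0:ℝ)..1, T x ^ 2 with hvdef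
  set w := ∫ x in (0:ℝ)..1, S x ^ 2 with hwdef
  have hR2 : 1 ≤ R ^ 2 := one_le_pow₀ hR1
  have hvY : |v| ≤ (2 * K * R) ^ 2 := by nlinarith [hv, sq_nonneg (K * R)]
  have hwY : |w| ≤ (2 * K * R) ^ 2 := by
    have h1 := abs_add_le (w - v) v
    rw [sub_add_cancel] at h1
    have h2 : 2 * K ^ 2 ≤ 2 * K ^ 2 * R ^ 2 := le_mul_of_one_le_right (by positivity) hR2
    have h3 : (2 * K * R) ^ 2 = 2 * K ^ 2 * R ^ 2 + 2 * K ^ 2 * R ^ 2 := by ring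
    linarith [hv]
  have c3 := gaussMoment_lipschitz hvY hwY c2 (r + 3)
  have hhalf : ((2 * K * R) ^ 2) ^ ((r + 3) / 2 - 1) ≤ (2 * K * R) ^ (r + 1) := by
    rw [← pow_mul]
    exact pow_le_pow_right₀ (by nlinarith) (by omega)
  have hfac : (1 : ℝ) ≤ (r + 3).factorial := by exact_mod_cast Nat.factorial_pos _
  have hpw : (((r + 3 : ℕ) : ℝ)) ≤ 2 ^ (r + 3) := by exact_mod_cast (Nat.lt_two_pow_self).le
  set P := K ^ (r + 3) * (r + 3).factorial * R ^ (r + 2) with hP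
  have hP0 : 0 ≤ P := by positivity
  have b1 : (r + 3 : ℕ) * K ^ (r + 3) * R ^ (r + 2) ≤ 16 ^ (r + 3) * P := by
    have : (2 : ℝ) ^ (r + 3) ≤ 16 ^ (r + 3) := by gcongr; norm_num
    calc _ ≤ (16 : ℝ) ^ (r + 3) * K ^ (r + 3) * R ^ (r + 2) := by gcongr; linarith
      _ = 16 ^ (r + 3) * (K ^ (r + 3) * 1 * R ^ (r + 2)) := by ring
      _ ≤ _ := by rw [hP]; gcongr
  have b2 : 8 ^ (r + 3) * (r + 3).factorial * K ^ (r + 3) * R ^ (r + 3) / R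
      ≤ 16 ^ (r + 3) * P := by
    have : 8 ^ (r + 3) * (r + 3).factorial * K ^ (r + 3) * R ^ (r + 3) / R
        = 8 ^ (r + 3) * P := by
      rw [hP, pow_succ R (r + 2)]; field_simp
    rw [this]
    gcongr; norm_num
  have b3 : (r + 3).factorial * (r + 3 : ℕ) * ((2 * K * R) ^ 2) ^ ((r + 3) / 2 - 1) * (2 * K ^ 2)
      ≤ 2 * (16 ^ (r + 3) * P) := by
    calc _ ≤ (r + 3).factorial * (2 : ℝ) ^ (r + 3) * (2 * K * R) ^ (r + 1) * (2 * K ^ 2) := by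
          gcongr
      _ = 2 * ((2 ^ (r + 3) * 2 ^ (r + 1)) * (K ^ (r + 3) * (r + 3).factorial * R ^ (r + 1))) := by
          rw [mul_pow, mul_pow]; ring
      _ ≤ 2 * (16 ^ (r + 3) * P) := by
          have h16 : (2 : ℝ) ^ (r + 3) * 2 ^ (r + 1) ≤ 16 ^ (r + 3) := by
            rw [show (16 : ℝ) = 2 ^ 4 by norm_num, ← pow_mul, ← pow_add]
            exact pow_le_pow_right₀ (by norm_num) (by omega)
          rw [hP]
          gcongr
          norm_num
  have e : 4 * (16 * K) ^ (r + 3) * (r + 3).factorial * R ^ (r + 3 - 1)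
      = 4 * (16 ^ (r + 3) * P) := by
    rw [hP, mul_pow, show r + 3 - 1 = r + 2 by omega]; ring
  rw [e]
  have t1 := abs_sub_le (∫ x in (0:ℝ)..1, S x ^ (r + 3)) (∫ x in (0:ℝ)..1, T x ^ (r + 3))
    (gaussMoment (r + 3) w)
  have t2 := abs_sub_le (∫ x in (0:ℝ)..1, T x ^ (r + 3)) (gaussMoment (r + 3) v)
    (gaussMoment (r + 3) w)
  linarith [hmain]

/-- Lemma 1 of the paper: moment estimates for `S_N = ∑_{k<N} f(n_k ·)` under
Condition `A_ω`: for `p ≥ 3` and `N` large enough that `ω_{⌊N^{1/4}⌋} ≥ 8p`,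
`∫₀¹ S_N^p = (p!/((p/2)!)) 2^{-p/2} σ_N^p + O(exp(p²) N^{(p-1)/2} (log N)^p)` for even `p`,
and `∫₀¹ S_N^p = O(exp(p²) N^{(p-1)/2} (log N)^p)` for odd `p`, with an absolute constant. -/
theorem statement7
    (ω : ℕ → ℝ) (hω_pos : ∀ k, 0 < ω k) (hω_mono : Monotone ω)
    (hω_top : Tendsto ω atTop atTop)
    (n : ℕ → ℕ) (hn_pos : ∀ k, 0 < n k) (hn_inj : Function.Injective n)
    (hA : CondA ω n)
    (f : ℝ → ℝ) (hf_meas : Measurable f)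
    (hf_per : ∀ x, f (x + 1) = f x)
    (hf_int : ∫ x in (0:ℝ)..1, f x = 0)
    (hf_bv : BoundedVariationOn f (Set.Icc 0 1))
    (S : ℕ → ℝ → ℝ) (hS : ∀ N x, S N x = ∑ k ∈ Finset.range N, f (n k * x))
    (σ' : ℕ → ℝ) (hσ' : ∀ N, σ' N = Real.sqrt (∫ x in (0:ℝ)..1, (S N x) ^ 2)) :
    ∃ C : ℝ, 0 < C ∧ ∃ N₁ : ℕ, ∀ (p N : ℕ), 3 ≤ p → N₁ ≤ N →
      (8 * (p : ℝ)) ≤ ω (⌊(N : ℝ) ^ ((1 : ℝ) / 4)⌋₊) →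
      (Even p →
        |(∫ x in (0:ℝ)..1, (S N x) ^ p) -
            ((p.factorial : ℝ) / ((p / 2).factorial * 2 ^ (p / 2))) * (σ' N) ^ p|
          ≤ C * Real.exp ((p : ℝ) ^ 2) * (N : ℝ) ^ (((p : ℝ) - 1) / 2) * (Real.log N) ^ p) ∧
      (Odd p →
        |∫ x in (0:ℝ)..1, (S N x) ^ p|
          ≤ C * Real.exp ((p : ℝ) ^ 2) * (N : ℝ) ^ (((p : ℝ) - 1) / 2) * (Real.log N) ^ p) := by
  obtain ⟨N₀, hA⟩ := hA
  obtain ⟨K₁, hK₁⟩ := bdd_of_bv hf_per hf_bv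
  obtain ⟨W, hW⟩ := bv_modulus hf_per hf_bv
  set K := max 1 (max K₁ W) with hKdef
  have hK1 : 1 ≤ K := le_max_left _ _
  have hKb : ∀ x, |f x| ≤ K := fun x =>
    (hK₁ x).trans ((le_max_left _ _).trans (le_max_right _ _))
  have hKW : ∀ t, |t| ≤ 1 / 2 → ∫ x in (0:ℝ)..1, |f (x + t) - f x| ≤ K * |t| := fun t ht =>
    (hW t ht).trans (mul_le_mul_of_nonneg_right
      ((le_max_right _ _).trans (le_max_right _ _)) (abs_nonneg t))
  -- The threshold makes `⌊N ^ (1/4)⌋` at least `max N₀ 4`.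
  refine ⟨4 * exp (16 * K), by positivity, (max N₀ 4) ^ 4, ?_⟩
  intro p N hp3 hN hω
  set M := ⌊(N : ℝ) ^ ((1 : ℝ) / 4)⌋₊ with hM
  have hroot : ((N : ℝ) ^ ((1 : ℝ) / 4)) ^ 4 = N := by
    rw [← Real.rpow_natCast, ← Real.rpow_mul (by positivity)]; norm_num
  have hroot0 : 0 ≤ (N : ℝ) ^ ((1 : ℝ) / 4) := by positivity
  have hM0 : max N₀ 4 ≤ M := by
    apply Nat.le_floor
    refine le_of_pow_le_pow_left₀ (n := 4) (by norm_num) hroot0 ?_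
    rw [hroot]; exact_mod_cast hN
  have hMN : M ^ 4 ≤ N := by
    have h := pow_le_pow_left₀ (by positivity) (Nat.floor_le hroot0) 4
    rw [hroot] at h
    exact_mod_cast h
  have hNM : N < (M + 1) ^ 4 := by
    have h := pow_lt_pow_left₀ (Nat.lt_floor_add_one ((N : ℝ) ^ ((1 : ℝ) / 4))) hroot0
      (n := 4) (by norm_num)
    rw [hroot] at h
    exact_mod_cast h
  have hcore := core hA ((le_max_left _ _).trans hM0) hn_pos hn_inj hω hp3
    ((le_max_right _ _).trans hM0) hMN hNM hf_meas hK1 hKb hf_per hf_int hKW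
  have hM4 : 4 ≤ M := (le_max_right _ _).trans hM0
  have hN3 : (3 : ℝ) ≤ N := by
    have : 4 ^ 4 ≤ N := (Nat.pow_le_pow_left hM4 4).trans hMN
    exact_mod_cast (by omega : 3 ≤ N)
  have hlog : (1 : ℝ) ≤ Real.log N ^ p := by
    refine one_le_pow₀ ((Real.le_log_iff_exp_le (by linarith)).mpr ?_)
    exact (Real.exp_one_lt_d9.le.trans (by norm_num)).trans hN3
  have hsqrt : √(N : ℝ) ^ (p - 1) = (N : ℝ) ^ (((p : ℝ) - 1) / 2) := by
    rw [Real.sqrt_eq_rpow, ← Real.rpow_natCast, ← Real.rpow_mul (by positivity),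
      Nat.cast_sub (by omega)]
    congr 1; push_cast; ring
  have hbound : 4 * (16 * K) ^ p * p.factorial * √(N : ℝ) ^ (p - 1) ≤
      4 * exp (16 * K) * exp ((p : ℝ) ^ 2) * (N : ℝ) ^ (((p : ℝ) - 1) / 2) * Real.log N ^ p := by
    rw [hsqrt]
    refine le_trans ?_ (le_mul_of_one_le_right (by positivity) hlog)
    exact mul_le_mul_of_nonneg_right (const_bound hK1 p) (by positivity)
  have hSN : S N = fun x => ∑ i ∈ Finset.range N, f (n i * x) := funext (hS N)
  have hcore := hcore.trans hbound
  constructor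
  · intro hev
    have hσp : σ' N ^ p = (∫ x in (0:ℝ)..1, (S N x) ^ 2) ^ (p / 2) := by
      obtain ⟨l, rfl⟩ := hev
      rw [← two_mul, Nat.mul_div_cancel_left l (by norm_num), pow_mul, hσ', Real.sq_sqrt]
      exact intervalIntegral.integral_nonneg zero_le_one fun x _ => sq_nonneg _
    rw [hσp, hSN]
    rw [gaussMoment, if_pos hev] at hcore
    exact hcore
  · intro hodd
    rw [gaussMoment_odd hodd, sub_zero] at hcore
    rw [hSN]
    exact hcore
end
end

section
/- Let ω be a nondecreasing sequence of positive reals tending to +∞ and let (n_k) be a sequence of distinct positive integers satisfying Condition A_ω. Then for any f satisfying the stated conditions, ∫₀¹ ( Σ_{k=1}^N f(n_k x) )² dx ∼ ‖f‖² N as N → ∞, i.e. the ratio of the two sides tends to 1 (when ‖f‖ > 0; if ‖f‖ = 0 the left side is o(N)). -/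
/-!
Expanding the square gives `∑_{k,l<N} ∫₀¹ f(n_k x) f(n_l x) dx`, whose diagonal is exactly `‖f‖² N`.

For the off-diagonal terms, write `n_k = d a`, `n_l = d b` with `a`, `b` coprime; by periodicity the
integral equals `∫₀¹ f(ax) f(bx) dx`. Averaging over the shifts `x ↦ x + i/a`, which fix `f(ax)` and,
by coprimality, permute the points `bx + i/a` modulo `1`, replaces `f(bx)` by `S(bx)/a`, where
`S(y) = ∑_{i<a} f(y + i/a)`. Since `S` is `1/a`-periodic with mean zero and its oscillation is at
most the variation `V` of `f`, `|S| ≤ V`. Hence the integral is at most `sup|f| · V / a`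
(`abs_integral_coprime_le`), and by symmetry at most `sup|f| · V / max(a, b)`.

Condition `A_ω` is needed only for `r = 2`, at a level `M` with `M⁴ ≤ N ≤ M⁸`: the relation
`b n_k - a n_l = 0` forces `max(a, b) > M^{ω_M} ≥ N²` unless `n_k` and `n_l` are both among the `M`
smallest elements. So at most `M² ≤ √N` off-diagonal terms are merely bounded, and the others add
up to `O(1)`; both contributions are `o(N)`.
-/


open MeasureTheory Filter Real Topology

noncomputable section

/-! ### Sums over translates of the `a`-division points -/

/-- The sum of `f` over the `a` points of a translate of `(1/a)ℤ / ℤ`. -/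
def shiftSum (f : ℝ → ℝ) (a : ℕ) (y : ℝ) : ℝ := ∑ i ∈ Finset.range a, f (y + i / a)

lemma shiftSum_periodic {f : ℝ → ℝ} (hf_per : Function.Periodic f 1) {a : ℕ} (ha : 0 < a) :
    Function.Periodic (shiftSum f a) (1 / a) := by
  intro y
  have ha' : (a : ℝ) ≠ 0 := by positivity
  have h1 := Finset.sum_range_succ (fun i : ℕ => f (y + i / a)) a
  have h2 := Finset.sum_range_succ' (fun i : ℕ => f (y + i / a)) a
  have h3 : f (y + (a : ℝ) / a) = f (y + ((0 : ℕ) : ℝ) / a) := by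
    rw [div_self ha']; simpa using hf_per y
  have h4 : ∑ i ∈ Finset.range a, f (y + ((i + 1 : ℕ) : ℝ) / a) = shiftSum f a (y + 1 / a) := by
    unfold shiftSum
    refine Finset.sum_congr rfl fun i _ => ?_
    congr 1
    push_cast
    ring
  unfold shiftSum at h4 ⊢
  linarith

lemma abs_shiftSum_sub_le_of_mem {f : ℝ → ℝ} (hf_bv : BoundedVariationOn f (Set.Icc 0 1))
    {a : ℕ} (ha : 0 < a) {y z : ℝ} (hy : y ∈ Set.Ico (0 : ℝ) (1 / a))
    (hz : z ∈ Set.Ico (0 : ℝ) (1 / a)) :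
    |shiftSum f a y - shiftSum f a z| ≤ (eVariationOn f (Set.Icc 0 1)).toReal := by
  have ha' : (0 : ℝ) < a := by positivity
  have hI : Monotone (fun i : ℕ => (i : ℝ) / a) := fun i j hij => by
    dsimp only
    gcongr
  have hsum := eVariationOn.sum' f hI (n := a)
  simp only [Nat.cast_zero, zero_div, div_self ha'.ne'] at hsum
  have hmem : ∀ (i : ℕ) (w : ℝ), w ∈ Set.Ico (0 : ℝ) (1 / a) →
      w + i / a ∈ Set.Icc ((i : ℝ) / a) (((i + 1 : ℕ) : ℝ) / a) := by
    intro i w hw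
    have : ((i + 1 : ℕ) : ℝ) / a = 1 / a + i / a := by push_cast; ring
    rw [this]
    exact ⟨by linarith [hw.1], by linarith [hw.2]⟩
  have key : ∑ i ∈ Finset.range a, edist (f (y + i / a)) (f (z + i / a))
      ≤ eVariationOn f (Set.Icc 0 1) := by
    rw [← hsum]
    exact Finset.sum_le_sum fun i _ => eVariationOn.edist_le f (hmem i y hy) (hmem i z hz)
  have key2 : ∑ i ∈ Finset.range a, |f (y + i / a) - f (z + i / a)|
      ≤ (eVariationOn f (Set.Icc 0 1)).toReal := by
    have := ENNReal.toReal_mono hf_bv key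
    rw [ENNReal.toReal_sum (fun i _ => edist_ne_top _ _)] at this
    simpa only [edist_dist, Real.dist_eq, ENNReal.toReal_ofReal (abs_nonneg _)] using this
  unfold shiftSum
  rw [← Finset.sum_sub_distrib]
  exact (Finset.abs_sum_le_sum_abs _ _).trans key2

lemma abs_shiftSum_sub_le {f : ℝ → ℝ} (hf_per : Function.Periodic f 1)
    (hf_bv : BoundedVariationOn f (Set.Icc 0 1)) {a : ℕ} (ha : 0 < a) (y z : ℝ) :
    |shiftSum f a y - shiftSum f a z| ≤ (eVariationOn f (Set.Icc 0 1)).toReal := by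
  have hp : (0 : ℝ) < 1 / a := by positivity
  obtain ⟨y', hy', e1⟩ := (shiftSum_periodic hf_per ha).exists_mem_Ico₀ hp y
  obtain ⟨z', hz', e2⟩ := (shiftSum_periodic hf_per ha).exists_mem_Ico₀ hp z
  rw [e1, e2]
  exact abs_shiftSum_sub_le_of_mem hf_bv ha hy' hz'

lemma exists_bound {f : ℝ → ℝ} (hf_per : Function.Periodic f 1)
    (hf_bv : BoundedVariationOn f (Set.Icc 0 1)) : ∃ K, 0 ≤ K ∧ ∀ x, |f x| ≤ K := by
  refine ⟨|f 0| + (eVariationOn f (Set.Icc 0 1)).toReal, by positivity, fun x => ?_⟩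
  obtain ⟨y, hy, e⟩ := hf_per.exists_mem_Ico₀ one_pos x
  rw [e]
  have := hf_bv.dist_le (x := y) (y := 0) ⟨hy.1, hy.2.le⟩ (by simp)
  rw [Real.dist_eq] at this
  have h2 := abs_add_le (f y - f 0) (f 0)
  rw [sub_add_cancel] at h2
  linarith

lemma intervalIntegrable_of_bdd_s8 {g : ℝ → ℝ} (hg : Measurable g) {K : ℝ} (hK : ∀ x, |g x| ≤ K)
    (s t : ℝ) : IntervalIntegrable g volume s t := by
  refine (intervalIntegrable_const (c := K)).mono_fun hg.aestronglyMeasurable ?_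
  filter_upwards with x
  exact (hK x).trans (le_abs_self K)

lemma integral_shift_s8 {g : ℝ → ℝ} (hg : Function.Periodic g 1) (c : ℝ) :
    ∫ x in (0 : ℝ)..1, g (x + c) = ∫ x in (0 : ℝ)..1, g x := by
  rw [intervalIntegral.integral_comp_add_right]
  have := hg.intervalIntegral_add_eq c 0
  rw [zero_add] at this
  rw [zero_add, add_comm 1 c, this]

lemma integral_dilate_s8 {g : ℝ → ℝ} (hg : Function.Periodic g 1) (hm : Measurable g) {K : ℝ}
    (hK : ∀ x, |g x| ≤ K) {d : ℕ} (hd : 0 < d) :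
    ∫ x in (0 : ℝ)..1, g (d * x) = ∫ x in (0 : ℝ)..1, g x := by
  have hd_ne : (d : ℝ) ≠ 0 := by positivity
  rw [intervalIntegral.integral_comp_mul_left _ hd_ne]
  have := hg.intervalIntegral_add_zsmul_eq d 0 (intervalIntegrable_of_bdd_s8 hm hK)
  simp only [zero_add, zsmul_eq_mul, Int.cast_natCast, mul_one] at this
  rw [mul_zero, mul_one, this, smul_eq_mul, inv_mul_cancel_left₀ hd_ne]

/-- The mean of `shiftSum f a` is zero, so its oscillation bounds its size. -/
lemma abs_shiftSum_le {f : ℝ → ℝ} (hf_meas : Measurable f) (hf_per : Function.Periodic f 1)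
    (hf_int : ∫ x in (0:ℝ)..1, f x = 0)
    (hf_bv : BoundedVariationOn f (Set.Icc 0 1)) {a : ℕ} (ha : 0 < a) (y : ℝ) :
    |shiftSum f a y| ≤ (eVariationOn f (Set.Icc 0 1)).toReal := by
  obtain ⟨K, -, hK⟩ := exists_bound hf_per hf_bv
  have hii : ∀ i ∈ Finset.range a,
      IntervalIntegrable (fun z => f (z + (i : ℝ) / a)) volume 0 1 := fun i _ =>
    intervalIntegrable_of_bdd_s8 (by fun_prop) (fun x => hK _) 0 1
  have h0 : ∫ z in (0 : ℝ)..1, shiftSum f a z = 0 := by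
    unfold shiftSum
    rw [intervalIntegral.integral_finsetSum hii]
    exact Finset.sum_eq_zero fun i _ => by rw [integral_shift_s8 hf_per, hf_int]
  have hS : IntervalIntegrable (shiftSum f a) volume 0 1 := by
    have he : shiftSum f a = ∑ i ∈ Finset.range a, fun z => f (z + (i : ℝ) / a) := by
      ext z
      simp [shiftSum]
    rw [he]
    exact IntervalIntegrable.sum _ hii
  have h1 : ∫ z in (0 : ℝ)..1, (shiftSum f a y - shiftSum f a z) = shiftSum f a y := by
    rw [intervalIntegral.integral_sub intervalIntegrable_const hS, h0]
    simp
  have h2 := intervalIntegral.norm_integral_le_of_norm_le_const (a := 0) (b := 1)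
    (f := fun z => shiftSum f a y - shiftSum f a z)
    (C := (eVariationOn f (Set.Icc 0 1)).toReal)
    (fun z _ => abs_shiftSum_sub_le hf_per hf_bv ha y z)
  rw [h1] at h2
  simpa using h2

/-! ### Correlations of two dilates -/

/-- For `b` coprime to `a`, multiplication by `b` permutes `(1/a)ℤ / ℤ`. -/
lemma sum_mul_eq_shiftSum {f : ℝ → ℝ} (hf_per : Function.Periodic f 1) {a b : ℕ} (ha : 0 < a)
    (hab : a.Coprime b) (y : ℝ) :
    ∑ i ∈ Finset.range a, f (y + b * (i / a)) = shiftSum f a y := by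
  have ha' : (a : ℝ) ≠ 0 := by positivity
  have hmaps : Set.MapsTo (fun i => b * i % a) (Finset.range a) (Finset.range a) := fun i _ => by
    simpa using Nat.mod_lt _ ha
  have hinj : Set.InjOn (fun i => b * i % a) (Finset.range a) := by
    intro i hi j hj hij
    have h : b * i ≡ b * j [MOD a] := hij
    have := Nat.ModEq.cancel_left_of_coprime hab h
    simp only [Finset.coe_range, Set.mem_Iio] at hi hj
    exact Nat.ModEq.eq_of_lt_of_lt this hi hj
  have hsurj := Finset.surjOn_of_injOn_of_card_le _ hmaps hinj le_rfl
  unfold shiftSum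
  refine Finset.sum_nbij (fun i => b * i % a) hmaps hinj hsurj fun i _ => ?_
  have h1 : ((b * i : ℕ) : ℝ) = ((b * i % a : ℕ) : ℝ) + a * ((b * i / a : ℕ) : ℝ) := by
    exact_mod_cast (Nat.mod_add_div (b * i) a).symm
  have h2 : y + b * ((i : ℝ) / a)
      = (y + ((b * i % a : ℕ) : ℝ) / a) + ((b * i / a : ℕ) : ℝ) * 1 := by
    push_cast at h1 ⊢
    field_simp
    linarith
  rw [h2]
  exact hf_per.nat_mul _ _

lemma periodic_dilate {f : ℝ → ℝ} (hf_per : Function.Periodic f 1) (a : ℕ) :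
    Function.Periodic (fun x => f (a * x)) 1 := by
  intro x
  have := hf_per.nat_mul a (a * x)
  dsimp only
  rw [mul_add, this]

lemma abs_integral_coprime_le {f : ℝ → ℝ} (hf_meas : Measurable f)
    (hf_per : Function.Periodic f 1) (hf_int : ∫ x in (0:ℝ)..1, f x = 0)
    (hf_bv : BoundedVariationOn f (Set.Icc 0 1)) {K : ℝ} (hK : ∀ x, |f x| ≤ K)
    {a b : ℕ} (ha : 0 < a) (hab : a.Coprime b) :
    |∫ x in (0 : ℝ)..1, f (a * x) * f (b * x)| * a
      ≤ K * (eVariationOn f (Set.Icc 0 1)).toReal := by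
  have ha' : (a : ℝ) ≠ 0 := by positivity
  have hK0 : 0 ≤ K := (abs_nonneg _).trans (hK 0)
  set J := ∫ x in (0 : ℝ)..1, f (a * x) * f (b * x) with hJ
  have hper : Function.Periodic (fun x => f (a * x) * f (b * x)) 1 :=
    (periodic_dilate hf_per a).mul (periodic_dilate hf_per b)
  have hshift : ∀ i : ℕ, ∫ x in (0 : ℝ)..1, f (a * x) * f (b * x + b * (i / a)) = J := by
    intro i
    rw [hJ, ← integral_shift_s8 hper (i / a)]
    refine intervalIntegral.integral_congr fun x _ => ?_
    have h1 : (a : ℝ) * (x + i / a) = a * x + i * 1 := by field_simp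
    rw [h1, hf_per.nat_mul i, mul_add]
  have hsum : J * a = ∫ x in (0 : ℝ)..1, f (a * x) * shiftSum f a (b * x) := by
    have : ∑ i ∈ Finset.range a, ∫ x in (0 : ℝ)..1, f (a * x) * f (b * x + b * ((i : ℝ) / a))
        = J * a := by
      rw [Finset.sum_congr rfl fun i _ => hshift i]
      simp [mul_comm]
    rw [← this, ← intervalIntegral.integral_finsetSum]
    · refine intervalIntegral.integral_congr fun x _ => ?_
      rw [← Finset.mul_sum, sum_mul_eq_shiftSum hf_per ha hab]
    · intro i _
      refine intervalIntegrable_of_bdd_s8 (K := K * K) (by fun_prop) (fun x => ?_) 0 1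
      rw [abs_mul]
      exact mul_le_mul (hK _) (hK _) (abs_nonneg _) hK0
  have h2 := intervalIntegral.norm_integral_le_of_norm_le_const (a := 0) (b := 1)
    (f := fun x => f (a * x) * shiftSum f a (b * x))
    (C := K * (eVariationOn f (Set.Icc 0 1)).toReal) (fun x _ => by
      rw [Real.norm_eq_abs, abs_mul]
      exact mul_le_mul (hK _) (abs_shiftSum_le hf_meas hf_per hf_int hf_bv ha _)
        (abs_nonneg _) hK0)
  rw [← hsum, Real.norm_eq_abs, abs_mul, Nat.abs_cast] at h2
  simpa using h2

/-- The off-diagonal estimate in terms of any lower bound `R` for the larger of the two reduced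
frequencies. -/
lemma abs_integral_pair_le {f : ℝ → ℝ} (hf_meas : Measurable f)
    (hf_per : Function.Periodic f 1) (hf_int : ∫ x in (0:ℝ)..1, f x = 0)
    (hf_bv : BoundedVariationOn f (Set.Icc 0 1)) {K : ℝ} (hK : ∀ x, |f x| ≤ K)
    {d a b : ℕ} (hd : 0 < d) (ha : 0 < a) (hb : 0 < b) (hab : a.Coprime b) {R : ℝ} (hR0 : 0 < R)
    (hR : R ≤ a ∨ R ≤ b) :
    |∫ x in (0 : ℝ)..1, f ((d * a : ℕ) * x) * f ((d * b : ℕ) * x)|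
      ≤ K * (eVariationOn f (Set.Icc 0 1)).toReal / R := by
  have hK0 : 0 ≤ K := (abs_nonneg _).trans (hK 0)
  have h1 : ∫ x in (0 : ℝ)..1, f ((d * a : ℕ) * x) * f ((d * b : ℕ) * x)
      = ∫ x in (0 : ℝ)..1, f (a * x) * f (b * x) := by
    have hper : Function.Periodic (fun x => f (a * x) * f (b * x)) 1 :=
      (periodic_dilate hf_per a).mul (periodic_dilate hf_per b)
    rw [← integral_dilate_s8 hper (K := K * K) (by fun_prop) (fun x => ?_) hd]
    · refine intervalIntegral.integral_congr fun x _ => ?_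
      simp only [Nat.cast_mul]
      congr 2 <;> ring
    · rw [abs_mul]
      exact mul_le_mul (hK _) (hK _) (abs_nonneg _) hK0
  rw [h1, le_div_iff₀ hR0]
  rcases hR with hR | hR
  · exact (mul_le_mul_of_nonneg_left hR (abs_nonneg _)).trans
      (abs_integral_coprime_le hf_meas hf_per hf_int hf_bv hK ha hab)
  · have := abs_integral_coprime_le hf_meas hf_per hf_int hf_bv hK hb hab.symm
    simp_rw [mul_comm (f ((b : ℝ) * _))] at this
    exact (mul_le_mul_of_nonneg_left hR (abs_nonneg _)).trans this

/-! ### Condition `A_ω` and the count of exceptional pairs -/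

lemma card_le_of_amongSmallest {n : ℕ → ℕ} (hn_inj : Function.Injective n) {M : ℕ}
    (T : Finset ℕ) (hT : ∀ k ∈ T, AmongSmallest n M k) : T.card ≤ M := by
  rcases T.eq_empty_or_nonempty with rfl | hne
  · simp
  obtain ⟨k, hk, hmax⟩ := T.exists_max_image n hne
  have hfin : {j : ℕ | n j ≤ n k}.Finite :=
    (Set.finite_Iic (n k)).preimage hn_inj.injOn
  have hsub : (T : Set ℕ) ⊆ {j : ℕ | n j ≤ n k} := fun j hj => hmax j hj
  have := Set.ncard_le_ncard hsub hfin
  rw [Set.ncard_coe_finset] at this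
  exact this.trans (hT k hk)

/-- Condition `A_ω` for relations of length two: a pair that is not among the `M` smallest
elements has a large reduced frequency. -/
lemma CondAWith.pair {ω : ℕ → ℝ} {n : ℕ → ℕ} {N₀ : ℕ} (hA : CondAWith ω n N₀) {M : ℕ}
    (hM : N₀ ≤ M) (hω : 2 ≤ ω M) {k l : ℕ} (hkl : k ≠ l) {d a b : ℕ} (ha : 0 < a) (hb : 0 < b)
    (hk : n k = d * a) (hl : n l = d * b)
    (hnot : ¬ (AmongSmallest n M k ∧ AmongSmallest n M l)) :
    (M : ℝ) ^ ω M ≤ a ∨ (M : ℝ) ^ ω M ≤ b := by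
  by_contra! hcon
  apply hnot
  have := hA M hM 2 ![k, l] ![(b : ℤ), -(a : ℤ)] le_rfl (by exact_mod_cast hω)
    (by
      intro i j hij
      fin_cases i <;> fin_cases j <;> simp_all)
    (by
      intro i
      fin_cases i <;> simp <;> omega)
    (by
      intro i
      fin_cases i
      · simpa using hcon.2.le
      · simpa using hcon.1.le)
    (by
      simp [Fin.sum_univ_two, hk, hl]
      ring)
  exact ⟨by simpa using this 0, by simpa using this 1⟩

/-- The quantitative form of the asymptotics, at a level `M` whose threshold `M ^ ω M` is at least
`N ^ 2`. -/
lemma abs_integral_sub_le {ω : ℕ → ℝ} {n : ℕ → ℕ} (hn_pos : ∀ k, 0 < n k)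
    (hn_inj : Function.Injective n) {N₀ : ℕ} (hA : CondAWith ω n N₀)
    {f : ℝ → ℝ} (hf_meas : Measurable f)
    (hf_per : Function.Periodic f 1) (hf_int : ∫ x in (0:ℝ)..1, f x = 0)
    (hf_bv : BoundedVariationOn f (Set.Icc 0 1)) {K : ℝ} (hK : ∀ x, |f x| ≤ K)
    {M N : ℕ} (hM : N₀ ≤ M) (hω : 2 ≤ ω M) (hN : 0 < N) (hMN : (N : ℝ) ^ 2 ≤ (M : ℝ) ^ ω M) :
    |(∫ x in (0:ℝ)..1, (∑ k ∈ Finset.range N, f (n k * x)) ^ 2)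
        - (∫ x in (0:ℝ)..1, f x ^ 2) * N|
      ≤ (M : ℝ) ^ 2 * K ^ 2 + K * (eVariationOn f (Set.Icc 0 1)).toReal := by
  classical
  have hK0 : 0 ≤ K := (abs_nonneg _).trans (hK 0)
  set V := (eVariationOn f (Set.Icc 0 1)).toReal with hV
  have hV0 : 0 ≤ V := ENNReal.toReal_nonneg
  set F := ∫ x in (0:ℝ)..1, f x ^ 2 with hF
  have hprod : ∀ p q : ℝ, |f p * f q| ≤ K ^ 2 := fun p q => by
    rw [abs_mul, sq]
    exact mul_le_mul (hK _) (hK _) (abs_nonneg _) hK0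
  have hN' : (0 : ℝ) < (N : ℝ) ^ 2 := by positivity
  let c : ℕ → ℕ → ℝ := fun k l => ∫ x in (0:ℝ)..1, f (n k * x) * f (n l * x)
  have hexp : ∫ x in (0:ℝ)..1, (∑ k ∈ Finset.range N, f (n k * x)) ^ 2
      = ∑ k ∈ Finset.range N, ∑ l ∈ Finset.range N, c k l := by
    have hii : ∀ k l : ℕ, IntervalIntegrable (fun x => f (n k * x) * f (n l * x)) volume 0 1 :=
      fun k l => intervalIntegrable_of_bdd_s8 (by fun_prop) (fun x => hprod _ _) 0 1
    simp_rw [sq, Finset.sum_mul_sum]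
    rw [intervalIntegral.integral_finsetSum]
    · refine Finset.sum_congr rfl fun k _ => ?_
      exact intervalIntegral.integral_finsetSum fun l _ => hii k l
    · intro k _
      have he : (fun x => ∑ l ∈ Finset.range N, f (n k * x) * f (n l * x))
          = ∑ l ∈ Finset.range N, fun x => f (n k * x) * f (n l * x) := by
        ext x
        simp
      rw [he]
      exact IntervalIntegrable.sum _ fun l _ => hii k l
  have hdiag : F * N = ∑ k ∈ Finset.range N, ∑ l ∈ Finset.range N, if k = l then F else 0 := by
    rw [Finset.sum_congr rfl (fun k hk => by
      rw [Finset.sum_ite_eq, if_pos hk] :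
        ∀ k ∈ Finset.range N, (∑ l ∈ Finset.range N, if k = l then F else 0) = F)]
    simp [mul_comm]
  let T := (Finset.range N).filter (fun k => AmongSmallest n M k)
  have hT : (T.card : ℝ) ≤ M := by
    exact_mod_cast card_le_of_amongSmallest hn_inj T fun k hk => (Finset.mem_filter.1 hk).2
  have hterm : ∀ k ∈ Finset.range N, ∀ l ∈ Finset.range N,
      |c k l - if k = l then F else 0|
        ≤ (if k ∈ T then 1 else 0) * (if l ∈ T then K ^ 2 else 0) + K * V / (N : ℝ) ^ 2 := by
    intro k hk l hl
    have hpos : 0 ≤ K * V / (N : ℝ) ^ 2 := by positivity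
    have hpos2 : (0 : ℝ) ≤ (if k ∈ T then 1 else 0) * (if l ∈ T then K ^ 2 else 0) := by
      split_ifs <;> simp [sq_nonneg]
    by_cases hkl : k = l
    · subst hkl
      have : c k k = F := by
        have h := integral_dilate_s8 (g := fun x => f x ^ 2) (K := K ^ 2)
          (fun x => by simp only [hf_per x]) (by fun_prop)
          (fun x => by rw [sq (f x)]; exact hprod x x) (hn_pos k)
        rw [hF, ← h]
        exact intervalIntegral.integral_congr fun x _ => (sq _).symm
      rw [this, if_pos rfl, sub_self, abs_zero]
      positivity
    rw [if_neg hkl, sub_zero]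
    by_cases hs : AmongSmallest n M k ∧ AmongSmallest n M l
    · have hkT : k ∈ T := Finset.mem_filter.2 ⟨hk, hs.1⟩
      have hlT : l ∈ T := Finset.mem_filter.2 ⟨hl, hs.2⟩
      rw [if_pos hkT, if_pos hlT, one_mul]
      have := intervalIntegral.norm_integral_le_of_norm_le_const (a := 0) (b := 1)
        (f := fun x => f (n k * x) * f (n l * x)) (C := K ^ 2) (fun x _ => hprod _ _)
      have h3 : |c k l| ≤ K ^ 2 := by simpa using this
      linarith
    · obtain ⟨d, a, b, hd, hab, hka, hlb⟩ :
          ∃ d a b : ℕ, 0 < d ∧ a.Coprime b ∧ n k = d * a ∧ n l = d * b := by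
        obtain ⟨g, a, b, hg, hab, h1, h2⟩ :=
          Nat.exists_coprime' (Nat.gcd_pos_of_pos_left (n l) (hn_pos k))
        exact ⟨g, a, b, hg, hab, by rw [h1, mul_comm], by rw [h2, mul_comm]⟩
      have ha : 0 < a := Nat.pos_of_ne_zero fun h => by
        have := hn_pos k
        simp [hka, h] at this
      have hb : 0 < b := Nat.pos_of_ne_zero fun h => by
        have := hn_pos l
        simp [hlb, h] at this
      have hR := hA.pair hM hω hkl ha hb hka hlb hs
      have := abs_integral_pair_le hf_meas hf_per hf_int hf_bv hK hd ha hb hab hN'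
        (hR.imp hMN.trans hMN.trans)
      rw [← hka, ← hlb] at this
      have h3 : |c k l| ≤ K * V / (N : ℝ) ^ 2 := this
      linarith
  rw [hexp, hdiag, ← Finset.sum_sub_distrib]
  simp_rw [← Finset.sum_sub_distrib]
  calc |∑ k ∈ Finset.range N, ∑ l ∈ Finset.range N, (c k l - if k = l then F else 0)|
      ≤ ∑ k ∈ Finset.range N, ∑ l ∈ Finset.range N,
          ((if k ∈ T then 1 else 0) * (if l ∈ T then K ^ 2 else 0) + K * V / (N : ℝ) ^ 2) := by
        refine (Finset.abs_sum_le_sum_abs _ _).trans (Finset.sum_le_sum fun k hk => ?_)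
        exact (Finset.abs_sum_le_sum_abs _ _).trans
          (Finset.sum_le_sum fun l hl => hterm k hk l hl)
    _ = (T.card : ℝ) ^ 2 * K ^ 2 + K * V := by
        have hTs : Finset.range N ∩ T = T :=
          Finset.inter_eq_right.2 (Finset.filter_subset _ _)
        simp only [Finset.sum_add_distrib, ← Finset.mul_sum, ← Finset.sum_mul, Finset.sum_ite_mem,
          hTs, Finset.sum_const, Finset.card_range, nsmul_eq_mul]
        field_simp
    _ ≤ (M : ℝ) ^ 2 * K ^ 2 + K * V := by gcongr

/-- Lemma 2 of the paper: under Condition `A_ω`,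
`∫₀¹ (∑_{k<N} f(n_k x))² dx ∼ ‖f‖² N` as `N → ∞`; that is, the ratio tends to `1` when
`‖f‖ > 0`, and the left-hand side is `o(N)` when `‖f‖ = 0`. -/
theorem statement8
    (ω : ℕ → ℝ) (hω_pos : ∀ k, 0 < ω k) (hω_mono : Monotone ω)
    (hω_top : Tendsto ω atTop atTop)
    (n : ℕ → ℕ) (hn_pos : ∀ k, 0 < n k) (hn_inj : Function.Injective n)
    (hA : CondA ω n)
    (f : ℝ → ℝ) (hf_meas : Measurable f)
    (hf_per : ∀ x, f (x + 1) = f x)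
    (hf_int : ∫ x in (0:ℝ)..1, f x = 0)
    (hf_bv : BoundedVariationOn f (Set.Icc 0 1)) :
    ((0 : ℝ) < ∫ x in (0:ℝ)..1, f x ^ 2 →
      Tendsto (fun N : ℕ =>
          (∫ x in (0:ℝ)..1, (∑ k ∈ Finset.range N, f (n k * x)) ^ 2) /
            ((∫ x in (0:ℝ)..1, f x ^ 2) * N))
        atTop (𝓝 1)) ∧
    ((∫ x in (0:ℝ)..1, f x ^ 2) = 0 →
      Tendsto (fun N : ℕ =>
          (∫ x in (0:ℝ)..1, (∑ k ∈ Finset.range N, f (n k * x)) ^ 2) / N)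
        atTop (𝓝 0)) := by
  obtain ⟨N₀, hA⟩ := hA
  obtain ⟨K, hK0, hK⟩ := exists_bound hf_per hf_bv
  set V := (eVariationOn f (Set.Icc 0 1)).toReal with hV
  set F := ∫ x in (0:ℝ)..1, f x ^ 2 with hF
  set L : ℕ → ℝ := fun N => ∫ x in (0:ℝ)..1, (∑ k ∈ Finset.range N, f (n k * x)) ^ 2 with hL
  -- The level `M` attached to `N` is the integer part of the fourth root of `N`.
  let m : ℕ → ℕ := fun N => Nat.sqrt (Nat.sqrt N)
  have hsqrt : Tendsto Nat.sqrt atTop atTop :=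
    tendsto_atTop.2 fun b => (eventually_ge_atTop (b * b)).mono fun N hN => Nat.le_sqrt.2 hN
  have hm : Tendsto m atTop atTop := hsqrt.comp hsqrt
  have hbound : ∀ᶠ N : ℕ in atTop, |L N - F * N| ≤ √N * K ^ 2 + K * V := by
    filter_upwards [hm.eventually_ge_atTop N₀, hm.eventually_ge_atTop 2,
      (hω_top.comp hm).eventually_ge_atTop 16, eventually_gt_atTop 0] with N h1 h2 h3 h4
    simp only [Function.comp_apply] at h3
    have hup : N ≤ m N ^ 8 := by
      have e1 : N < (Nat.sqrt N + 1) ^ 2 := by rw [sq]; exact Nat.lt_succ_sqrt N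
      have e2 : Nat.sqrt N + 1 ≤ (m N + 1) ^ 2 := by
        rw [sq]; exact Nat.lt_succ_sqrt (Nat.sqrt N)
      have e3 : m N + 1 ≤ m N ^ 2 := by nlinarith
      calc N ≤ (Nat.sqrt N + 1) ^ 2 := e1.le
        _ ≤ ((m N + 1) ^ 2) ^ 2 := by gcongr
        _ ≤ ((m N ^ 2) ^ 2) ^ 2 := by gcongr
        _ = m N ^ 8 := by ring
    have hpow : (N : ℝ) ^ 2 ≤ (m N : ℝ) ^ ω (m N) := by
      have e1 : (1 : ℝ) ≤ m N := by exact_mod_cast (by omega : 1 ≤ m N)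
      calc (N : ℝ) ^ 2 ≤ ((m N : ℝ) ^ 8) ^ 2 := by
            gcongr
            exact_mod_cast hup
        _ = (m N : ℝ) ^ (16 : ℝ) := by
            rw [← pow_mul]
            exact_mod_cast (Real.rpow_natCast (m N : ℝ) 16).symm
        _ ≤ (m N : ℝ) ^ ω (m N) := Real.rpow_le_rpow_of_exponent_le e1 h3
    have hlow : (m N : ℝ) ^ 2 ≤ √N := by
      have e1 : m N ^ 2 ≤ Nat.sqrt N := by rw [sq]; exact Nat.sqrt_le (Nat.sqrt N)
      calc (m N : ℝ) ^ 2 ≤ (Nat.sqrt N : ℝ) := by exact_mod_cast e1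
        _ ≤ √N := Real.nat_sqrt_le_real_sqrt
    refine (abs_integral_sub_le hn_pos hn_inj hA hf_meas hf_per hf_int hf_bv hK h1
      (by linarith) h4 hpow).trans ?_
    gcongr
  have hlim : Tendsto (fun N : ℕ => L N / N) atTop (𝓝 F) := by
    have hinv : Tendsto (fun N : ℕ => (√(N : ℝ))⁻¹) atTop (𝓝 0) :=
      tendsto_inv_atTop_zero.comp (Real.tendsto_sqrt_atTop.comp tendsto_natCast_atTop_atTop)
    have hb0 : Tendsto (fun N : ℕ => (√(N : ℝ))⁻¹ * K ^ 2 + (√(N : ℝ))⁻¹ ^ 2 * (K * V)) atTop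
        (𝓝 0) := by
      simpa using (hinv.mul_const (K ^ 2)).add ((hinv.pow 2).mul_const (K * V))
    rw [tendsto_iff_norm_sub_tendsto_zero]
    refine squeeze_zero' (Eventually.of_forall fun _ => norm_nonneg _) ?_ hb0
    filter_upwards [hbound, eventually_gt_atTop 0] with N hN hpos
    have hN' : (0 : ℝ) < N := by exact_mod_cast hpos
    have hs : 0 < √(N : ℝ) := Real.sqrt_pos.2 hN'
    have hsq : √(N : ℝ) ^ 2 = N := Real.sq_sqrt hN'.le
    have e : L N / N - F = (L N - F * N) / N := by field_simp
    rw [Real.norm_eq_abs, e, abs_div, abs_of_pos hN', div_le_iff₀ hN']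
    refine hN.trans (le_of_eq ?_)
    rw [← hsq]
    simp only [Real.sqrt_sq hs.le]
    field_simp
  refine ⟨fun hFpos => ?_, fun hF0 => ?_⟩
  · have := hlim.div_const F
    rw [div_self hFpos.ne'] at this
    refine this.congr fun N => ?_
    rw [div_div, mul_comm F]
  · rw [hF0] at hlim
    exact hlim
end
end

section
/- There exists a strictly increasing sequence (μ_k) of positive integers — namely the increasing enumeration of ∪_{j≥1} {m_j, 2m_j, …, r_j m_j}, where each m_j is a power of 2, m_{j+1} ≥ r_j 2^{2j} m_j, and r_j ∼ j log j — such that limsup_{N→∞} | Σ_{k=1}^N cos(2π μ_k x) | / √(N log N) > 0 for Lebesgue-almost every x ∈ (0,1); in particular, limsup_{N→∞} | Σ_{k=1}^N cos(2π μ_k x) | / √(2N log log N) = +∞ almost everywhere. -/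
/-! Take `r_j = ⌊j log j⌋ + 1` and let `a_j` be the least integer with `8 r_j ≤ 2 ^ a_j`. The bases
`m_j = 2 ^ s_j` are chosen with `s_{j+1} = s_j + a_j + 2 j`, so that the windows of binary digits
`s_j + 1, …, s_j + a_j` are disjoint.

Call `x` resonant with block `j` if its binary digits in the `j`-th window all vanish. Then the
fractional part of `m_j x` is below `1 / (8 r_j)`, every term `cos (2 π i m_j x)` with `i ≤ r_j` is
at least `1 / 2`, and the `j`-th block contributes at least `r_j / 2` (`block_sum_ge`). Hence the
partial sum has absolute value at least `r_j / 4` at one of the two ends of the block. The number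
`N` of terms there is at most `j r_j ≤ j ^ 3`, so `√(N log N) ≤ 2 r_j` (`sqrt_le_of_le`), and the
normalized partial sum is at least `1 / 8` (`frequently_large`).

Resonance with block `j` has probability `2 ^ (-a_j) ≥ 1 / (16 r_j)`, which is comparable to
`1 / (j log j)` and therefore has divergent sum (`tendsto_sum_prob`). Because the digit windows are
disjoint, the set avoiding resonance with blocks `n, …, M - 1` has measure at most
`exp (-∑_{n ≤ j < M} 2 ^ (-a_j))`, which tends to zero; so almost every `x` is resonant with
infinitely many blocks (`ae_frequently_zeroDigits`). The statement about `√(2 N log log N)` follows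
since `log N / log log N → ∞`.
-/

open MeasureTheory Filter Real Topology

noncomputable section

/-- Block lengths `r_j = ⌊j log j⌋ + 1`, so that `j log j < r_j ≤ j log j + 1`. -/
def blockLen (j : ℕ) : ℕ := ⌊(j : ℝ) * Real.log j⌋₊ + 1

/-- Number of binary digits that must vanish for `x` to be resonant with the `j`-th block:
the least `a` with `8 r_j ≤ 2 ^ a`. -/
def numZeros (j : ℕ) : ℕ := Nat.clog 2 (8 * blockLen j)

/-- Exponents of the block bases: `m_j = 2 ^ baseExp j`. -/
def baseExp : ℕ → ℕ
  | 0 => 0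
  | j + 1 => baseExp j + numZeros j + 2 * j

/-- The bases `m_j` of the blocks. -/
def base (j : ℕ) : ℕ := 2 ^ baseExp j

/-- The set of frequencies `⋃_{j ≥ 1} {m_j, 2 m_j, …, r_j m_j}`. -/
def freqSet : Set ℕ :=
  {v : ℕ | ∃ j : ℕ, 1 ≤ j ∧ ∃ i : ℕ, 1 ≤ i ∧ i ≤ blockLen j ∧ v = i * base j}

/-- The points whose binary digits at positions `s + 1, …, s + a` all vanish. -/
def zeroDigits (s a : ℕ) : Set ℝ := {x | ∃ k : ℤ, ⌊(2 : ℝ) ^ (s + a) * x⌋ = 2 ^ a * k}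

/-- `B` is a union of dyadic intervals `[l / 2 ^ s, (l + 1) / 2 ^ s)`. -/
def IsDyadic (s : ℕ) (B : Set ℝ) : Prop :=
  ∀ x y : ℝ, ⌊(2 : ℝ) ^ s * x⌋ = ⌊(2 : ℝ) ^ s * y⌋ → x ∈ B → y ∈ B

/-! ### Block lengths and bases -/

theorem blockLen_pos (j : ℕ) : 0 < blockLen j := Nat.succ_pos _

theorem lt_blockLen (j : ℕ) : (j : ℝ) * Real.log j < blockLen j := by
  simpa [blockLen] using Nat.lt_floor_add_one ((j : ℝ) * Real.log j)

theorem nonneg_mul_log (j : ℕ) : 0 ≤ (j : ℝ) * Real.log j :=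
  mul_nonneg (Nat.cast_nonneg _) (Real.log_natCast_nonneg _)

theorem blockLen_le (j : ℕ) : (blockLen j : ℝ) ≤ j * Real.log j + 1 := by
  simpa [blockLen] using Nat.floor_le (nonneg_mul_log j)

theorem blockLen_mono : Monotone blockLen := by
  intro i j hij
  refine Nat.succ_le_succ (Nat.floor_le_floor ?_)
  rcases Nat.eq_zero_or_pos i with h | h
  · subst h; simpa using nonneg_mul_log j
  · have hi : (0 : ℝ) < i := by exact_mod_cast h
    have : Real.log i ≤ Real.log j := Real.log_le_log hi (by exact_mod_cast hij)
    gcongr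

theorem blockLen_le_sq {j : ℕ} (hj : 1 ≤ j) : blockLen j ≤ j ^ 2 := by
  have h1 : (1 : ℝ) ≤ j := by exact_mod_cast hj
  have h2 := Real.log_le_sub_one_of_pos (lt_of_lt_of_le one_pos h1)
  have h3 := blockLen_le j
  have : (blockLen j : ℝ) ≤ (j : ℝ) ^ 2 := by nlinarith
  exact_mod_cast this

theorem tendsto_mul_log : Tendsto (fun j : ℕ => (j : ℝ) * Real.log j) atTop atTop :=
  tendsto_natCast_atTop_atTop.atTop_mul_atTop₀
    (Real.tendsto_log_atTop.comp tendsto_natCast_atTop_atTop)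

theorem tendsto_blockLen :
    Tendsto (fun j : ℕ => (blockLen j : ℝ) / (j * Real.log j)) atTop (𝓝 1) := by
  have hpos : ∀ᶠ j : ℕ in atTop, 0 < (j : ℝ) * Real.log j := tendsto_mul_log.eventually_gt_atTop 0
  have hup : Tendsto (fun j : ℕ => 1 + 1 / ((j : ℝ) * Real.log j)) atTop (𝓝 1) := by
    simpa using (tendsto_const_nhds (x := (1 : ℝ))).add tendsto_mul_log.inv_tendsto_atTop
  refine tendsto_of_tendsto_of_tendsto_of_le_of_le' tendsto_const_nhds hup ?_ ?_
  · filter_upwards [hpos] with j hj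
    rw [le_div_iff₀ hj, one_mul]
    exact (lt_blockLen j).le
  · filter_upwards [hpos] with j hj
    rw [div_le_iff₀ hj, add_mul, one_div, inv_mul_cancel₀ hj.ne', one_mul]
    exact blockLen_le j

theorem le_two_pow_numZeros (j : ℕ) : 8 * blockLen j ≤ 2 ^ numZeros j :=
  Nat.le_pow_clog (by norm_num) _

theorem two_pow_numZeros_le (j : ℕ) : 2 ^ numZeros j ≤ 16 * blockLen j := by
  have hp := blockLen_pos j
  have h := Nat.pow_pred_clog_lt_self (b := 2) one_lt_two (x := 8 * blockLen j) (by omega)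
  have h0 : 0 < Nat.clog 2 (8 * blockLen j) := Nat.clog_pos (by norm_num) (by omega)
  have : 2 ^ numZeros j = 2 * 2 ^ (Nat.clog 2 (8 * blockLen j)).pred := by
    rw [← pow_succ', ← Nat.succ_eq_add_one, Nat.succ_pred_eq_of_pos h0, numZeros]
  omega

theorem base_pos (j : ℕ) : 0 < base j := by unfold base; positivity

theorem base_succ (j : ℕ) : base (j + 1) = base j * 2 ^ numZeros j * 2 ^ (2 * j) := by
  simp [base, baseExp, pow_add]

theorem baseExp_mono : Monotone baseExp :=
  monotone_nat_of_le_succ fun j => by simp only [baseExp]; omega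

theorem base_mono : Monotone base := fun _ _ h =>
  Nat.pow_le_pow_right (by norm_num) (baseExp_mono h)

theorem base_growth (j : ℕ) : blockLen j * 2 ^ (2 * j) * base j ≤ base (j + 1) := by
  have h : blockLen j ≤ 2 ^ numZeros j := by have := le_two_pow_numZeros j; omega
  calc blockLen j * 2 ^ (2 * j) * base j ≤ 2 ^ numZeros j * 2 ^ (2 * j) * base j := by gcongr
    _ = base (j + 1) := by rw [base_succ]; ring

/-- The `j`-th block ends before the next one begins. -/
theorem block_lt_base_succ (j : ℕ) : blockLen j * base j < base (j + 1) := by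
  have hlt : blockLen j < 2 ^ numZeros j := by
    have := le_two_pow_numZeros j; have := blockLen_pos j; omega
  calc blockLen j * base j < 2 ^ numZeros j * base j := Nat.mul_lt_mul_of_pos_right hlt (base_pos j)
    _ ≤ 2 ^ numZeros j * base j * 2 ^ (2 * j) := Nat.le_mul_of_pos_right _ (by positivity)
    _ = base (j + 1) := by rw [base_succ]; ring

/-! ### Divergence of the resonance probabilities -/

/-- Telescoping: `log log (j + 1) - log log j ≤ 1 / (j log j)`. -/
theorem loglog_step {j : ℕ} (hj : 2 ≤ j) :
    Real.log (Real.log (j + 1 : ℕ)) - Real.log (Real.log j) ≤ 1 / (j * Real.log j) := by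
  have h2 : (2 : ℝ) ≤ j := by exact_mod_cast hj
  have hl : 0 < Real.log j := Real.log_pos (by linarith)
  have hl' : 0 < Real.log (j + 1 : ℕ) := Real.log_pos (by push_cast; linarith)
  rw [← Real.log_div hl'.ne' hl.ne']
  refine (Real.log_le_sub_one_of_pos (by positivity)).trans ?_
  have h3 : Real.log (j + 1 : ℕ) - Real.log j ≤ 1 / j := by
    rw [← Real.log_div (by positivity) (by positivity)]
    refine (Real.log_le_sub_one_of_pos (by positivity)).trans (le_of_eq ?_)
    push_cast; field_simp; ring
  rw [div_sub_one hl.ne', ← div_div]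
  gcongr

/-- The resonance probability `2 ^ (-a_j)` of the `j`-th block is at least a constant times
`1 / (j log j)`. -/
theorem resonance_prob_ge {j : ℕ} (hj : 3 ≤ j) :
    1 / 32 * (1 / (j * Real.log j)) ≤ ((2 : ℝ) ^ numZeros j)⁻¹ := by
  have h3 : (3 : ℝ) ≤ j := by exact_mod_cast hj
  have hl : 1 ≤ Real.log j := by
    rw [Real.le_log_iff_exp_le (by linarith)]
    exact Real.exp_one_lt_d9.le.trans (by linarith)
  have h1 : ((2 : ℝ) ^ numZeros j) ≤ 16 * blockLen j := by exact_mod_cast two_pow_numZeros_le j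
  have h2 := blockLen_le j
  have h4 : 1 ≤ (j : ℝ) * Real.log j := by nlinarith
  rw [← one_div_mul_one_div_rev, one_div_mul_one_div_rev, ← one_div (2 ^ numZeros j : ℝ),
    one_div_mul_one_div_rev]
  apply one_div_le_one_div_of_le (by positivity)
  linarith

theorem tendsto_sum_prob (n : ℕ) :
    Tendsto (fun M : ℕ => ∑ j ∈ Finset.Ico n M, ((2 : ℝ) ^ numZeros j)⁻¹) atTop atTop := by
  have key : ∀ k : ℕ, 3 ≤ k → ∀ M : ℕ, k ≤ M → 1 / 32 * (Real.log (Real.log M) - Real.log (Real.log k)) ≤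
      ∑ j ∈ Finset.Ico k M, ((2 : ℝ) ^ numZeros j)⁻¹ := by
    intro k hk M hM
    induction M, hM using Nat.le_induction with
    | base => simp
    | succ M hM ih =>
      rw [Finset.sum_Ico_succ_top hM]
      have h1 := loglog_step (j := M) (by omega)
      have h2 := resonance_prob_ge (j := M) (by omega)
      linarith
  set k := max n 3
  have hlim : Tendsto (fun M : ℕ => 1 / 32 * (Real.log (Real.log M) - Real.log (Real.log k)))
      atTop atTop := by
    refine Tendsto.const_mul_atTop (by norm_num) (tendsto_atTop_add_const_right _ _ ?_)
    exact Real.tendsto_log_atTop.comp (Real.tendsto_log_atTop.comp tendsto_natCast_atTop_atTop)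
  refine tendsto_atTop_mono' _ ?_ hlim
  filter_upwards [eventually_ge_atTop k] with M hM
  refine (key k (le_max_right _ _) M hM).trans ?_
  refine Finset.sum_le_sum_of_subset_of_nonneg
    (Finset.Ico_subset_Ico_left (le_max_left _ _)) fun _ _ _ => by positivity

/-! ### Dyadic sets and Borel–Cantelli -/

theorem IsDyadic.mono {s t : ℕ} (hst : s ≤ t) {B : Set ℝ} (hB : IsDyadic s B) : IsDyadic t B := by
  intro x y hxy
  apply hB x y
  obtain ⟨d, rfl⟩ := Nat.exists_eq_add_of_le hst
  -- The coarse floor is the integer quotient of the fine one.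
  have h : ∀ z : ℝ, ⌊(2 : ℝ) ^ s * z⌋ = ⌊(2 : ℝ) ^ (s + d) * z⌋ / ((2 ^ d : ℕ) : ℤ) := by
    intro z
    rw [← Int.floor_div_natCast]
    congr 1
    push_cast
    rw [pow_add]
    field_simp
  rw [h, h, hxy]

theorem isDyadic_zeroDigits (s a : ℕ) : IsDyadic (s + a) (zeroDigits s a) := by
  rintro x y hxy ⟨k, hk⟩
  exact ⟨k, hxy ▸ hk⟩

theorem isDyadic_Ico (s : ℕ) : IsDyadic s (Set.Ico 0 1) := by
  refine IsDyadic.mono (Nat.zero_le s) ?_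
  intro x y hxy hx
  simp only [pow_zero, one_mul] at hxy
  rw [Int.floor_eq_zero_iff.2 hx] at hxy
  exact Int.floor_eq_zero_iff.1 hxy.symm

theorem IsDyadic.diff {s : ℕ} {B C : Set ℝ} (hB : IsDyadic s B) (hC : IsDyadic s C) :
    IsDyadic s (B \ C) := fun x y hxy hx =>
  ⟨hB x y hxy hx.1, fun hy => hx.2 (hC y x hxy.symm hy)⟩

/-- Among the points of a dyadic set of level `s`, exactly the proportion `2 ^ (-a)` has the next
`a` binary digits equal to zero; only the upper bound on the complement is recorded. -/
theorem volume_diff_zeroDigits_le {s a : ℕ} {B : Set ℝ} (hB : IsDyadic s B)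
    (hsub : B ⊆ Set.Ico 0 1) :
    volume (B \ zeroDigits s a) ≤ ENNReal.ofReal (1 - (2 ^ a : ℝ)⁻¹) * volume B := by
  classical
  set D : ℕ → Set ℝ := fun l => Set.Ico ((l : ℝ) / 2 ^ s) ((l + 1 : ℝ) / 2 ^ s) with hD
  have hmem : ∀ (l : ℕ) (x : ℝ), x ∈ D l ↔ ⌊(2 : ℝ) ^ s * x⌋ = (l : ℤ) := by
    intro l x
    rw [Int.floor_eq_iff, hD, Set.mem_Ico, div_le_iff₀ (by positivity), lt_div_iff₀ (by positivity),
      mul_comm x]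
    simp
  set K : Finset ℕ := (Finset.range (2 ^ s)).filter fun l => D l ⊆ B with hK
  have hBK : B = ⋃ l ∈ K, D l := by
    apply Set.Subset.antisymm
    · intro x hx
      have h01 := hsub hx
      have h0 : 0 ≤ ⌊(2 : ℝ) ^ s * x⌋ := Int.floor_nonneg.2 (mul_nonneg (by positivity) h01.1)
      obtain ⟨l, hl⟩ := Int.eq_ofNat_of_zero_le h0
      have hlt : l < 2 ^ s := by
        have h1 : ((l : ℤ) : ℝ) ≤ 2 ^ s * x := hl ▸ Int.floor_le _
        have h2 : (2 : ℝ) ^ s * x < 2 ^ s * 1 := by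
          have := h01.2
          gcongr
        have : (l : ℝ) < 2 ^ s := by push_cast at h1; linarith
        exact_mod_cast this
      refine Set.mem_biUnion (x := l) ?_ ((hmem l x).2 hl)
      simp only [hK, Finset.coe_filter, Finset.mem_range, Set.mem_ofPred_eq]
      exact ⟨hlt, fun y hy => hB x y (hl.trans ((hmem l y).1 hy).symm) hx⟩
    · exact Set.iUnion₂_subset fun l hl => (Finset.mem_filter.1 hl).2
  have hdisj : (K : Set ℕ).PairwiseDisjoint D := by
    intro l _ l' _ hne
    refine Set.disjoint_left.2 fun x hx hx' => hne ?_
    have := ((hmem l x).1 hx).symm.trans ((hmem l' x).1 hx')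
    exact_mod_cast this
  have hvB : volume B = K.card * ENNReal.ofReal ((2 ^ s : ℝ)⁻¹) := by
    conv_lhs => rw [hBK]
    rw [measure_biUnion_finset hdisj fun l _ => measurableSet_Ico]
    have : ∀ l ∈ K, volume (D l) = ENNReal.ofReal ((2 ^ s : ℝ)⁻¹) := by
      intro l _
      rw [hD, Real.volume_Ico]
      congr 1
      field_simp
      ring
    rw [Finset.sum_congr rfl this, Finset.sum_const, nsmul_eq_mul]
  have hcov : B \ zeroDigits s a ⊆
      ⋃ l ∈ K, Set.Ico ((l : ℝ) / 2 ^ s + (2 ^ (s + a) : ℝ)⁻¹) ((l + 1 : ℝ) / 2 ^ s) := by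
    rintro x ⟨hx, hxa⟩
    rw [hBK] at hx
    obtain ⟨l, hl, hxl⟩ := Set.mem_iUnion₂.1 hx
    refine Set.mem_biUnion hl ⟨?_, hxl.2⟩
    by_contra! hlt
    refine hxa ⟨l, ?_⟩
    rw [Int.floor_eq_iff]
    have h1 := hxl.1
    rw [div_le_iff₀ (by positivity)] at h1
    have h2 : (2 : ℝ) ^ (s + a) * x < 2 ^ (s + a) * (l / 2 ^ s + (2 ^ (s + a) : ℝ)⁻¹) := by gcongr
    have h3 : (2 : ℝ) ^ (s + a) * (l / 2 ^ s + (2 ^ (s + a) : ℝ)⁻¹) = 2 ^ a * l + 1 := by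
      rw [pow_add]; field_simp
    push_cast
    refine ⟨?_, by linarith⟩
    calc (2 : ℝ) ^ a * l ≤ 2 ^ a * (x * 2 ^ s) := by gcongr
      _ = 2 ^ (s + a) * x := by ring
  have ha : (0 : ℝ) ≤ 1 - (2 ^ a : ℝ)⁻¹ :=
    sub_nonneg.2 (inv_le_one_of_one_le₀ (one_le_pow₀ one_le_two))
  calc volume (B \ zeroDigits s a) ≤ _ := measure_mono hcov
    _ ≤ ∑ l ∈ K, volume
        (Set.Ico ((l : ℝ) / 2 ^ s + (2 ^ (s + a) : ℝ)⁻¹) ((l + 1 : ℝ) / 2 ^ s)) :=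
      measure_biUnion_finset_le _ _
    _ = ∑ l ∈ K, ENNReal.ofReal (1 - (2 ^ a : ℝ)⁻¹) * ENNReal.ofReal ((2 ^ s : ℝ)⁻¹) := by
      refine Finset.sum_congr rfl fun l _ => ?_
      rw [Real.volume_Ico, ← ENNReal.ofReal_mul ha]
      congr 1
      rw [pow_add]
      field_simp
      ring
    _ = ENNReal.ofReal (1 - (2 ^ a : ℝ)⁻¹) * volume B := by
      rw [Finset.sum_const, nsmul_eq_mul, hvB]
      ring

/-- The points of `[0, 1)` resonant with none of the blocks `n, …, n + d - 1`. -/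
def survivors (n : ℕ) : ℕ → Set ℝ
  | 0 => Set.Ico 0 1
  | d + 1 => survivors n d \ zeroDigits (baseExp (n + d)) (numZeros (n + d))

theorem survivors_subset (n d : ℕ) : survivors n d ⊆ Set.Ico 0 1 := by
  induction d with
  | zero => exact subset_rfl
  | succ d ih => exact Set.sdiff_subset.trans ih

theorem isDyadic_survivors (n d : ℕ) : IsDyadic (baseExp (n + d)) (survivors n d) := by
  induction d with
  | zero => exact isDyadic_Ico _
  | succ d ih =>
    refine IsDyadic.diff (ih.mono (baseExp_mono (by omega))) ((isDyadic_zeroDigits _ _).mono ?_)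
    rw [← add_assoc]
    simp only [baseExp]
    omega

theorem volume_survivors_le (n d : ℕ) : volume (survivors n d) ≤
    ENNReal.ofReal (Real.exp (-∑ j ∈ Finset.Ico n (n + d), ((2 : ℝ) ^ numZeros j)⁻¹)) := by
  induction d with
  | zero => simp [survivors]
  | succ d ih =>
    refine (volume_diff_zeroDigits_le (isDyadic_survivors n d) (survivors_subset n d)).trans ?_
    rw [← add_assoc, Finset.sum_Ico_succ_top (by omega), neg_add, Real.exp_add, mul_comm (rexp _),
      ENNReal.ofReal_mul (Real.exp_pos _).le]
    gcongr
    have := Real.add_one_le_exp (-((2 : ℝ) ^ numZeros (n + d))⁻¹)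
    linarith

theorem mem_survivors {n : ℕ} {x : ℝ} (hx : x ∈ Set.Ico (0 : ℝ) 1)
    (h : ∀ j ≥ n, x ∉ zeroDigits (baseExp j) (numZeros j)) (d : ℕ) : x ∈ survivors n d := by
  induction d with
  | zero => exact hx
  | succ d ih => exact ⟨ih, h _ (by omega)⟩

/-- Divergence half of Borel–Cantelli: almost every `x` is resonant with infinitely many blocks. -/
theorem ae_frequently_zeroDigits : ∀ᵐ x ∂(volume.restrict (Set.Ioo (0 : ℝ) 1)),
    ∃ᶠ j in atTop, x ∈ zeroDigits (baseExp j) (numZeros j) := by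
  have hnull : ∀ n, volume (⋂ d, survivors n d) = 0 := by
    intro n
    have hlim : Tendsto (fun d : ℕ => ENNReal.ofReal
        (Real.exp (-∑ j ∈ Finset.Ico n (n + d), ((2 : ℝ) ^ numZeros j)⁻¹))) atTop (𝓝 0) := by
      rw [← ENNReal.ofReal_zero]
      refine ENNReal.tendsto_ofReal (Real.tendsto_exp_neg_atTop_nhds_zero.comp ?_)
      exact (tendsto_sum_prob n).comp (tendsto_atTop_mono (fun d => Nat.le_add_left d n) tendsto_id)
    refine le_antisymm (ge_of_tendsto' hlim fun d => ?_) zero_le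
    exact (measure_mono (Set.iInter_subset _ d)).trans (volume_survivors_le n d)
  have hae : ∀ᵐ x ∂(volume : Measure ℝ), ∀ n, x ∉ ⋂ d, survivors n d :=
    ae_all_iff.2 fun n => measure_eq_zero_iff_ae_notMem.1 (hnull n)
  filter_upwards [ae_restrict_of_ae hae, ae_restrict_mem measurableSet_Ioo] with x hx hx01
  rw [frequently_atTop]
  intro n
  by_contra! hcon
  exact hx n (Set.mem_iInter.2 (mem_survivors ⟨hx01.1.le, hx01.2⟩ hcon))

/-! ### Resonant blocks -/

theorem half_le_cos {t : ℝ} (h0 : 0 ≤ t) (h1 : t ≤ 1 / 8) : 1 / 2 ≤ Real.cos (2 * π * t) := by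
  rw [← Real.cos_pi_div_three]
  apply Real.cos_le_cos_of_nonneg_of_le_pi <;> nlinarith [Real.pi_pos]

/-- If the `a` binary digits of `x` following position `s` vanish, then `i * 2 ^ s * x` lies within
`1 / 8` to the right of an integer as soon as `8 * i ≤ 2 ^ a`. -/
theorem half_le_cos_of_mem {s a i : ℕ} {x : ℝ} (hx : x ∈ zeroDigits s a)
    (h8 : 8 * (i : ℝ) ≤ 2 ^ a) : 1 / 2 ≤ Real.cos (2 * π * (i * 2 ^ s) * x) := by
  obtain ⟨k, hk⟩ := hx
  obtain ⟨θ, hθ⟩ : ∃ θ, θ = Int.fract ((2 : ℝ) ^ (s + a) * x) := ⟨_, rfl⟩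
  have hθ0 : 0 ≤ θ := hθ ▸ Int.fract_nonneg _
  have hθ1 : θ ≤ 1 := hθ ▸ (Int.fract_lt_one _).le
  have hdecomp : (2 : ℝ) ^ s * x = k + θ / 2 ^ a := by
    have h := Int.floor_add_fract ((2 : ℝ) ^ (s + a) * x)
    rw [hk, ← hθ, pow_add] at h
    push_cast at h
    field_simp
    linarith
  have harg : 2 * π * (i * 2 ^ s) * x = 2 * π * (i * (θ / 2 ^ a)) + ((i * k : ℤ) : ℝ) * (2 * π) := by
    calc 2 * π * (i * 2 ^ s) * x = 2 * π * (i * (2 ^ s * x)) := by ring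
      _ = _ := by rw [hdecomp]; push_cast; ring
  rw [harg, Real.cos_add_int_mul_two_pi]
  refine half_le_cos (by positivity) ?_
  rw [← mul_div_assoc, div_le_iff₀ (by positivity)]
  have : (i : ℝ) * θ ≤ i * 1 := by gcongr
  linarith

/-- If `x` is resonant with the `j`-th block, all terms of this block are at least `1 / 2`. -/
theorem block_sum_ge {j : ℕ} {x : ℝ} (hx : x ∈ zeroDigits (baseExp j) (numZeros j)) :
    (blockLen j : ℝ) / 2 ≤
      ∑ i ∈ Finset.Icc 1 (blockLen j), Real.cos (2 * π * (i * base j : ℕ) * x) := by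
  have hterm : ∀ i ∈ Finset.Icc 1 (blockLen j),
      1 / 2 ≤ Real.cos (2 * π * (i * base j : ℕ) * x) := by
    intro i hi
    have h8 : 8 * i ≤ 2 ^ numZeros j :=
      (Nat.mul_le_mul_left 8 (Finset.mem_Icc.1 hi).2).trans (le_two_pow_numZeros j)
    have := half_le_cos_of_mem hx (i := i) (by exact_mod_cast h8)
    simpa only [base, Nat.cast_mul, Nat.cast_pow, Nat.cast_ofNat] using this
  have := Finset.card_nsmul_le_sum _ _ _ hterm
  simp only [Nat.card_Icc, nsmul_eq_mul, Nat.add_sub_cancel] at this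
  linarith

/-! ### Enumeration of the frequencies -/

section enumeration
open Classical

/-- The increasing enumeration of `freqSet`. -/
def freq : ℕ → ℕ := Nat.nth (· ∈ freqSet)

/-- Number of frequencies lying in the blocks before the `j`-th one. -/
def blockStart (j : ℕ) : ℕ := Nat.count (· ∈ freqSet) (base j)

theorem sum_freq (f : ℕ → ℝ) (n : ℕ) :
    ∑ k ∈ Finset.range (Nat.count (· ∈ freqSet) n), f (freq k)
      = ∑ v ∈ (Finset.range n).filter (· ∈ freqSet), f v := by
  induction n with
  | zero => simp
  | succ n ih =>
    rw [Nat.count_succ, Finset.range_add_one, Finset.filter_insert]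
    split_ifs with h
    · rw [Finset.sum_range_succ, ih, Finset.sum_insert (by simp), freq, Nat.nth_count h, add_comm]
    · simpa using ih

/-- The frequencies below `m_{j+1}` are those below `m_j` together with the `j`-th block. -/
theorem filter_base_succ {j : ℕ} (hj : 1 ≤ j) :
    (Finset.range (base (j + 1))).filter (· ∈ freqSet)
      = (Finset.range (base j)).filter (· ∈ freqSet) ∪
        (Finset.Icc 1 (blockLen j)).image (· * base j) := by
  ext v
  simp only [Finset.mem_filter, Finset.mem_range, Finset.mem_union, Finset.mem_image,
    Finset.mem_Icc]
  constructor
  · rintro ⟨hv, l, hl, i, hi, hir, rfl⟩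
    rcases lt_trichotomy l j with h | rfl | h
    · left
      refine ⟨?_, l, hl, i, hi, hir, rfl⟩
      calc i * base l ≤ blockLen l * base l := by gcongr
        _ < base (l + 1) := block_lt_base_succ l
        _ ≤ base j := base_mono h
    · right
      exact ⟨i, ⟨hi, hir⟩, rfl⟩
    · exfalso
      have h1 : base (j + 1) ≤ base l := base_mono h
      have h2 : base l ≤ i * base l := Nat.le_mul_of_pos_left _ hi
      omega
  · rintro (⟨hv, h⟩ | ⟨i, ⟨hi, hir⟩, rfl⟩)
    · exact ⟨hv.trans_le (base_mono (Nat.le_succ j)), h⟩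
    · refine ⟨?_, j, hj, i, hi, hir, rfl⟩
      calc i * base j ≤ blockLen j * base j := by gcongr
        _ < base (j + 1) := block_lt_base_succ j

theorem sum_blockStart_succ (f : ℕ → ℝ) {j : ℕ} (hj : 1 ≤ j) :
    ∑ k ∈ Finset.range (blockStart (j + 1)), f (freq k)
      = ∑ k ∈ Finset.range (blockStart j), f (freq k)
        + ∑ i ∈ Finset.Icc 1 (blockLen j), f (i * base j) := by
  rw [blockStart, blockStart, sum_freq, sum_freq, filter_base_succ hj, Finset.sum_union]
  · rw [Finset.sum_image]
    intro a _ b _ h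
    exact Nat.eq_of_mul_eq_mul_right (base_pos j) h
  · refine Finset.disjoint_left.2 fun v hv hv' => ?_
    simp only [Finset.mem_filter, Finset.mem_range, Finset.mem_image, Finset.mem_Icc] at hv hv'
    obtain ⟨i, ⟨hi, -⟩, rfl⟩ := hv'
    have := Nat.le_mul_of_pos_left (base j) hi
    omega

theorem blockStart_succ {j : ℕ} (hj : 1 ≤ j) :
    blockStart (j + 1) = blockStart j + blockLen j := by
  have := sum_blockStart_succ (fun _ => 1) hj
  simp only [Finset.sum_const, Finset.card_range, Nat.card_Icc, nsmul_eq_mul, mul_one,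
    Nat.add_sub_cancel] at this
  exact_mod_cast this

theorem blockStart_one : blockStart 1 = 0 := by
  rw [blockStart, Nat.count_eq_card_filter_range, Finset.card_eq_zero, Finset.filter_eq_empty_iff]
  rintro v hv ⟨j, hj, i, hi, -, rfl⟩
  have h1 := base_mono hj
  have h2 := Nat.le_mul_of_pos_left (base j) hi
  have h3 := Finset.mem_range.1 hv
  omega

theorem blockStart_succ_le {j : ℕ} (hj : 1 ≤ j) : blockStart (j + 1) ≤ j * blockLen j := by
  induction j, hj using Nat.le_induction with
  | base => rw [blockStart_succ le_rfl, blockStart_one]; omega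
  | succ j hj ih =>
    rw [blockStart_succ (by omega), add_mul, one_mul]
    have : j * blockLen j ≤ j * blockLen (j + 1) :=
      Nat.mul_le_mul_left _ (blockLen_mono (Nat.le_succ j))
    omega

theorem le_blockStart_succ (j : ℕ) : j ≤ blockStart (j + 1) := by
  induction j with
  | zero => omega
  | succ j ih =>
    rw [blockStart_succ (by omega)]
    have := blockLen_pos (j + 1)
    omega

theorem infinite_freqSet : freqSet.Infinite := by
  refine Set.infinite_of_not_bddAbove ?_
  rintro ⟨b, hb⟩
  have h1 : base (b + 2) ∈ freqSet :=
    ⟨b + 2, by omega, 1, le_rfl, blockLen_pos _, (one_mul _).symm⟩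
  have h2 : b + 1 ≤ blockStart (b + 2) := le_blockStart_succ (b + 1)
  have h3 : blockStart (b + 2) ≤ base (b + 2) := Nat.count_le _
  have := hb h1
  omega

end enumeration

theorem freq_strictMono : StrictMono freq := Nat.nth_strictMono infinite_freqSet

theorem range_freq : Set.range freq = freqSet := Nat.range_nth_of_infinite infinite_freqSet

theorem freq_pos (k : ℕ) : 0 < freq k := by
  obtain ⟨j, -, i, hi, -, h⟩ : freq k ∈ freqSet := range_freq ▸ Set.mem_range_self k
  rw [h]
  exact Nat.mul_pos hi (base_pos j)

/-! ### Large partial sums -/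

/-- Up to the end of the `j`-th block, `N ≤ j r_j ≤ j ^ 3`, hence
`N log N ≤ 3 r_j * (j log j) ≤ 3 r_j ^ 2`. -/
theorem sqrt_le_of_le {j N : ℕ} (hj : 1 ≤ j) (hN : N ≤ blockStart (j + 1)) :
    Real.sqrt (N * Real.log N) ≤ 2 * blockLen j := by
  rcases Nat.eq_zero_or_pos N with h0 | hNpos
  · subst h0; simp
  have hN1 : N ≤ j * blockLen j := hN.trans (blockStart_succ_le hj)
  have hN2 : N ≤ j ^ 3 := hN1.trans <| by
    calc j * blockLen j ≤ j * j ^ 2 := Nat.mul_le_mul_left _ (blockLen_le_sq hj)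
      _ = j ^ 3 := by ring
  have hlog : Real.log N ≤ 3 * Real.log j := by
    have : Real.log N ≤ Real.log ((j : ℝ) ^ 3) :=
      Real.log_le_log (by exact_mod_cast hNpos) (by exact_mod_cast hN2)
    simpa [Real.log_pow] using this
  have hN1' : (N : ℝ) ≤ j * blockLen j := by exact_mod_cast hN1
  have hlt := (lt_blockLen j).le
  have hr : (0 : ℝ) ≤ blockLen j := Nat.cast_nonneg _
  refine Real.sqrt_le_iff.2 ⟨by positivity, ?_⟩
  calc (N : ℝ) * Real.log N ≤ (j * blockLen j) * (3 * Real.log j) :=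
        mul_le_mul hN1' hlog (Real.log_natCast_nonneg _) (by positivity)
    _ = 3 * (blockLen j * (j * Real.log j)) := by ring
    _ ≤ 3 * (blockLen j * blockLen j) := by gcongr
    _ ≤ (2 * blockLen j) ^ 2 := by nlinarith

/-- A resonant block of length `r_j` changes the partial sum by at least `r_j / 2`, so the partial
sum is at least `r_j / 4` in absolute value at one of its two ends. -/
theorem frequently_large {x : ℝ}
    (hx : ∃ᶠ j in atTop, x ∈ zeroDigits (baseExp j) (numZeros j)) :
    ∃ᶠ N : ℕ in atTop, Real.sqrt (N * Real.log N) / 8 ≤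
      |∑ k ∈ Finset.range N, Real.cos (2 * π * freq k * x)| := by
  rw [frequently_atTop] at hx ⊢
  intro n
  obtain ⟨j, hjn, hxj⟩ := hx (n + 1)
  have hj : 1 ≤ j := by omega
  have hdiff := sum_blockStart_succ (fun v => Real.cos (2 * π * v * x)) hj
  have hblock := block_sum_ge hxj
  have hle : blockStart j ≤ blockStart (j + 1) := by rw [blockStart_succ hj]; omega
  have hn : n ≤ blockStart j := by
    obtain ⟨i, rfl⟩ := Nat.exists_eq_add_of_le' hj
    have := le_blockStart_succ i
    omega
  have hs1 := sqrt_le_of_le hj hle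
  have hs2 := sqrt_le_of_le hj le_rfl
  set S := fun N : ℕ => ∑ k ∈ Finset.range N, Real.cos (2 * π * freq k * x) with hS
  change S (blockStart (j + 1)) = S (blockStart j) + _ at hdiff
  by_cases h : (blockLen j : ℝ) / 4 ≤ |S (blockStart j)|
  · exact ⟨_, hn, by linarith⟩
  · refine ⟨_, hn.trans hle, ?_⟩
    have h1 := (abs_lt.1 (not_le.1 h)).1
    have h2 := le_abs_self (S (blockStart (j + 1)))
    change _ ≤ |S (blockStart (j + 1))|
    linarith

theorem eventually_loglog_small (c : ℝ) :
    ∀ᶠ N : ℕ in atTop, c * Real.log (Real.log N) ≤ Real.log N := by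
  have h : ∀ᶠ y : ℝ in atTop, c * Real.log y ≤ y := by
    have h0 := (Real.isLittleO_log_id_atTop.const_mul_left c).bound one_pos
    filter_upwards [h0, eventually_ge_atTop 0] with y hy hy0
    rw [Real.norm_eq_abs, Real.norm_eq_abs, id, abs_of_nonneg hy0, one_mul] at hy
    exact (le_abs_self _).trans hy
  exact (Real.tendsto_log_atTop.comp tendsto_natCast_atTop_atTop).eventually h

theorem eventually_one_lt_log : ∀ᶠ N : ℕ in atTop, 1 < Real.log N :=
  (Real.tendsto_log_atTop.comp tendsto_natCast_atTop_atTop).eventually_gt_atTop 1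

theorem limsup_sqrt_log_pos {S : ℕ → ℝ}
    (h : ∃ᶠ N : ℕ in atTop, Real.sqrt (N * Real.log N) / 8 ≤ |S N|) :
    (0 : EReal) < Filter.limsup (fun N : ℕ =>
      ((|S N| / Real.sqrt (N * Real.log N) : ℝ) : EReal)) atTop := by
  have hpos : (0 : EReal) < ((1 / 8 : ℝ) : EReal) := by
    exact_mod_cast (by norm_num : (0 : ℝ) < 1 / 8)
  refine hpos.trans_le (le_limsup_of_frequently_le ?_)
  refine (h.and_eventually (eventually_one_lt_log.and (eventually_gt_atTop 0))).mono ?_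
  rintro N ⟨hN, hlog, hN0⟩
  have hs : 0 < Real.sqrt (N * Real.log N) := by
    have : (0 : ℝ) < N := by exact_mod_cast hN0
    exact Real.sqrt_pos.2 (by nlinarith)
  rw [EReal.coe_le_coe_iff, le_div_iff₀ hs]
  linarith

theorem limsup_loglog_eq_top {S : ℕ → ℝ}
    (h : ∃ᶠ N : ℕ in atTop, Real.sqrt (N * Real.log N) / 8 ≤ |S N|) :
    Filter.limsup (fun N : ℕ =>
      ((|S N| / Real.sqrt (2 * N * Real.log (Real.log N)) : ℝ) : EReal)) atTop = ⊤ := by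
  rw [EReal.eq_top_iff_forall_lt]
  intro y
  -- It suffices to beat a positive constant `c > y` frequently.
  set c : ℝ := |y| + 1 with hc
  have hyc : (y : EReal) < (c : EReal) := by
    rw [EReal.coe_lt_coe_iff, hc]
    linarith [le_abs_self y]
  have hc0 : 0 < c := by positivity
  refine hyc.trans_le (le_limsup_of_frequently_le ?_)
  refine (h.and_eventually (eventually_one_lt_log.and ((eventually_gt_atTop 0).and
    (eventually_loglog_small (128 * c ^ 2))))).mono ?_
  rintro N ⟨hN, hlog, hN0, hsmall⟩
  have hN0' : (0 : ℝ) < N := by exact_mod_cast hN0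
  have hll : 0 < Real.log (Real.log N) := Real.log_pos hlog
  rw [EReal.coe_le_coe_iff, le_div_iff₀ (Real.sqrt_pos.2 (by positivity))]
  refine le_trans ?_ hN
  rw [le_div_iff₀ (by norm_num)]
  apply Real.le_sqrt_of_sq_le
  rw [mul_pow, mul_pow, Real.sq_sqrt (by positivity)]
  calc c ^ 2 * (2 * N * Real.log (Real.log N)) * 8 ^ 2
      = N * (128 * c ^ 2 * Real.log (Real.log N)) := by ring
    _ ≤ N * Real.log N := by gcongr

/-- Construction in the LIL part of the proof of Theorem 1: there is a strictly increasing
sequence `(μ_k)` of positive integers — the increasing enumeration of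
`⋃_{j≥1} {m_j, 2m_j, …, r_j m_j}` with `m_j` powers of `2`, `m_{j+1} ≥ r_j 2^{2j} m_j` and
`r_j ∼ j log j` — such that `limsup_N |∑_{k≤N} cos 2π μ_k x| / √(N log N) > 0` a.e. on
`(0,1)`, and in particular `limsup_N |∑_{k≤N} cos 2π μ_k x| / √(2N log log N) = +∞` a.e. -/
theorem statement10 :
    ∃ (μ : ℕ → ℕ) (m r : ℕ → ℕ),
      StrictMono μ ∧ (∀ k, 0 < μ k) ∧
      (∀ j : ℕ, 1 ≤ j → ∃ s : ℕ, m j = 2 ^ s) ∧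
      (∀ j : ℕ, 1 ≤ j → r j * 2 ^ (2 * j) * m j ≤ m (j + 1)) ∧
      Tendsto (fun j : ℕ => (r j : ℝ) / (j * Real.log j)) atTop (𝓝 1) ∧
      Set.range μ
        = {v : ℕ | ∃ j : ℕ, 1 ≤ j ∧ ∃ i : ℕ, 1 ≤ i ∧ i ≤ r j ∧ v = i * m j} ∧
      (∀ᵐ x ∂(volume.restrict (Set.Ioo (0:ℝ) 1)),
        (0 : EReal) < Filter.limsup (fun N : ℕ =>
            ((|∑ k ∈ Finset.range N, Real.cos (2 * π * μ k * x)| /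
                Real.sqrt (N * Real.log N) : ℝ) : EReal)) atTop ∧
        Filter.limsup (fun N : ℕ =>
            ((|∑ k ∈ Finset.range N, Real.cos (2 * π * μ k * x)| /
                Real.sqrt (2 * N * Real.log (Real.log N)) : ℝ) : EReal)) atTop = ⊤) := by
  refine ⟨freq, base, blockLen, freq_strictMono, freq_pos, fun j _ => ⟨_, rfl⟩,
    fun j _ => base_growth j, tendsto_blockLen, range_freq, ?_⟩
  filter_upwards [ae_frequently_zeroDigits] with x hx
  exact ⟨limsup_sqrt_log_pos (frequently_large hx), limsup_loglog_eq_top (frequently_large hx)⟩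
end
end
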